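/- Let Ω ⊆ ℝ³ be open with torsion-free C^∞ Christoffel symbols Γ^λ_{μν} : Ω → ℝ, let φ : W → Ω be a geodesic flow, let γ : I → Ω be a C^∞ curve on an open interval I, and let f(t,s) = φ(γ(t), γ'(t), s) be the ∇-tangent surface, defined on a neighborhood of (t₀,0) in I × ℝ. If (∇γ)(t₀), (∇²γ)(t₀), (∇³γ)(t₀) are linearly dependent while (∇γ)(t₀), (∇²γ)(t₀), (∇⁴γ)(t₀) are linearly independent, then the germ of f at (t₀,0) is diffeomorphic to the folded umbrella (t,s) ↦ (t+s, t²+2st, t⁴+4st³). -/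

import Mathlib

open Set

noncomputable section

/-- `σ` is a `C^∞` diffeomorphism from the open set `U` onto its open image. -/
def SmoothDiffeoOn {E F : Type*} [NormedAddCommGroup E] [NormedSpace ℝ E]
    [NormedAddCommGroup F] [NormedSpace ℝ F] (σ : E → F) (U : Set E) : Prop :=
  IsOpen U ∧ IsOpen (σ '' U) ∧ ContDiffOn ℝ (⊤ : ℕ∞) σ U ∧
    ∃ σinv : F → E, ContDiffOn ℝ (⊤ : ℕ∞) σinv (σ '' U) ∧ ∀ x ∈ U, σinv (σ x) = x

/-- The map-germ of `f` at `p` is diffeomorphic to the map-germ of `g` at `q`: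
there are open neighborhoods `U ∋ p`, `V ∋ f p` and `C^∞` diffeomorphisms
`σ` from `U` onto an open neighborhood of `q`, `τ` from `V` onto an open
neighborhood of `g q`, with `σ p = q`, `τ (f p) = g q`, `f(U) ⊆ V` and
`τ ∘ f = g ∘ σ` on `U`. -/
def GermDiffeomorphic {E F : Type*} [NormedAddCommGroup E] [NormedSpace ℝ E]
    [NormedAddCommGroup F] [NormedSpace ℝ F]
    (f : E → F) (p : E) (g : E → F) (q : E) : Prop :=
  ∃ (U : Set E) (V : Set F) (σ : E → E) (τ : F → F),
    SmoothDiffeoOn σ U ∧ SmoothDiffeoOn τ V ∧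
    p ∈ U ∧ f p ∈ V ∧ σ p = q ∧ τ (f p) = g q ∧
    (∀ x ∈ U, f x ∈ V) ∧ ∀ x ∈ U, τ (f x) = g (σ x)

/-- Iterated covariant derivative of a curve `γ` with respect to the Christoffel
symbols `Γ` (in local coordinates): `covDeriv Γ γ k` is `∇^{k+1} γ`, i.e.
`covDeriv Γ γ 0 = ∇γ = γ'` and
`(∇^{k+1}γ)^λ(t) = d/dt (∇^k γ)^λ(t) + Σ_{μ,ν} Γ^λ_{μν}(γ(t)) (γ^μ)'(t) (∇^k γ)^ν(t)`. -/
noncomputable def covDeriv {m : ℕ} (Γ : (Fin m → ℝ) → Fin m → Fin m → Fin m → ℝ)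
    (γ : ℝ → Fin m → ℝ) : ℕ → ℝ → Fin m → ℝ
  | 0 => deriv γ
  | k + 1 => fun t l =>
      deriv (fun u => covDeriv Γ γ k u l) t +
        ∑ μ, ∑ ν, Γ (γ t) l μ ν * deriv γ t μ * covDeriv Γ γ k t ν

/-- `φ : W → Ω` is a geodesic flow for the Christoffel symbols `Γ` on the open set
`Ω ⊆ ℝ^m`: `W ⊆ Ω × ℝ^m × ℝ` is an open neighborhood of `Ω × ℝ^m × {0}`, `φ` is `C^∞`
on `W`, and for each `(x, v)` the curve `s ↦ φ(x, v, s)` is a geodesic with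
`φ(x,v,0) = x` and `∂φ/∂s(x,v,0) = v`. -/
structure IsGeodesicFlow {m : ℕ} (Γ : (Fin m → ℝ) → Fin m → Fin m → Fin m → ℝ)
    (Ω : Set (Fin m → ℝ)) (W : Set ((Fin m → ℝ) × (Fin m → ℝ) × ℝ))
    (φ : (Fin m → ℝ) × (Fin m → ℝ) × ℝ → Fin m → ℝ) : Prop where
  isOpen_W : IsOpen W
  subset_fst : ∀ p ∈ W, p.1 ∈ Ω
  mem_zero : ∀ x ∈ Ω, ∀ v, (x, v, (0 : ℝ)) ∈ W
  smooth : ContDiffOn ℝ (⊤ : ℕ∞) φ W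
  mapsTo : ∀ p ∈ W, φ p ∈ Ω
  init_pos : ∀ x ∈ Ω, ∀ v, φ (x, v, 0) = x
  init_vel : ∀ x ∈ Ω, ∀ v, deriv (fun s => φ (x, v, s)) 0 = v
  geodesic : ∀ p ∈ W, ∀ l,
    deriv (deriv (fun s => φ (p.1, p.2.1, s) l)) p.2.2 +
      ∑ μ, ∑ ν, Γ (φ p) l μ ν * deriv (fun s => φ (p.1, p.2.1, s) μ) p.2.2 *
        deriv (fun s => φ (p.1, p.2.1, s) ν) p.2.2 = 0

/-!
In the variables `x = t + s` and `s`, the tangent surface of a torsion-free connection expands as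
`γ(x) - (s²/2) ∇²γ(x) + (s³/3) ∇³γ(x) + O(s⁴)`. As `∇γ, ∇²γ, ∇⁴γ` are independent at `t₀`, the
constant vector `e = ∇⁴γ(t₀)` completes `γ'` and `A = -∇²γ/2` to a frame, and
`(x, y, z) ↦ γ(x) + y A(x) + z e` is a chart. In it the surface is `(x, s², 0) + s³ (a, b, c)`. The
dependence of `∇γ, ∇²γ, ∇³γ` at `t₀` says that `c` vanishes at `(t₀, 0)`, the independence of
`∇γ, ∇²γ, ∇⁴γ` that its `x`-derivative does not.

Whitney's splitting `g(x, s) = p(x, s²) + s q(x, s²)`, obtained from Fourier inversion and the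
smoothness of `cos √u` and `sin √u / √u`, turns every term even in `s` into a function of the first
two coordinates. Coordinate changes absorb these and leave the normal form `(x, s², x s³)`, to
which the folded umbrella is equivalent as well.
-/

open scoped ContDiff Topology

open Filter MeasureTheory

section CosSqrt

/-- The entire function `cos √z`; as `cos` is even, the branch of the square root is immaterial. -/
def cosSqrt (z : ℂ) : ℂ := Complex.cos (z ^ (2⁻¹ : ℂ))

theorem cosSqrt_sq (w : ℂ) : cosSqrt (w ^ 2) = Complex.cos w := by
  have h : ((w ^ 2) ^ (2⁻¹ : ℂ)) ^ 2 = w ^ 2 := Complex.cpow_nat_inv_pow _ two_ne_zero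
  rcases sq_eq_sq_iff_eq_or_eq_neg.1 h with h | h <;> simp [cosSqrt, h]

theorem differentiable_cosSqrt : Differentiable ℂ cosSqrt := by
  have on_slitPlane : ∀ z ∈ Complex.slitPlane, DifferentiableAt ℂ cosSqrt z := fun z hz =>
    (differentiableAt_id.cpow_const hz).ccos
  have cosSqrt_neg : ∀ z, cosSqrt z = Complex.cos (Complex.I * (-z) ^ (2⁻¹ : ℂ)) := fun z => by
    rw [← cosSqrt_sq, mul_pow, Complex.I_sq]
    congr 1
    linear_combination Complex.cpow_nat_inv_pow (-z) two_ne_zero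
  have off_zero : ∀ z ≠ 0, DifferentiableAt ℂ cosSqrt z := fun z hz => by
    rcases Complex.mem_slitPlane_or_neg_mem_slitPlane hz with h | h
    · exact on_slitPlane z h
    · rw [funext cosSqrt_neg]
      exact ((differentiableAt_id.neg.cpow_const h).const_mul Complex.I).ccos
  have at_zero : ContinuousAt cosSqrt 0 :=
    Complex.continuous_cos.continuousAt.comp
      (Complex.continuousAt_cpow_const_of_re_pos (by simp) (by norm_num))
  rw [← differentiableOn_univ, ← Complex.differentiableOn_compl_singleton_and_continuousAt_iff
    (c := 0) univ_mem]
  exact ⟨fun z hz => (off_zero z hz.2).differentiableWithinAt, at_zero⟩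

theorem mul_deriv_cosSqrt_sq (w : ℂ) : w * (-2 * deriv cosSqrt (w ^ 2)) = Complex.sin w := by
  have h := (differentiable_cosSqrt (w ^ 2)).hasDerivAt.comp w (hasDerivAt_pow 2 w)
  have h' : HasDerivAt (cosSqrt ∘ (· ^ 2)) (-Complex.sin w) w := by
    simpa only [Function.comp_def, cosSqrt_sq] using Complex.hasDerivAt_cos w
  linear_combination -(h.unique h')

theorem norm_cos_le_exp_abs_im (w : ℂ) : ‖Complex.cos w‖ ≤ Real.exp |w.im| := by
  have h₁ : ‖Complex.exp (w * Complex.I)‖ ≤ Real.exp |w.im| := by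
    simpa [Complex.norm_exp] using neg_le_abs w.im
  have h₂ : ‖Complex.exp (-w * Complex.I)‖ ≤ Real.exp |w.im| := by
    simpa [Complex.norm_exp] using le_abs_self w.im
  rw [Complex.cos, norm_div, Complex.norm_two]
  linarith [norm_add_le (Complex.exp (w * Complex.I)) (Complex.exp (-w * Complex.I))]

/-- With `w ^ 2 = z` one has `2 (Im w) ^ 2 = ‖z‖ - Re z`, which is bounded near a half-line. -/
theorem norm_cosSqrt_le {z : ℂ} {u : ℝ} (hu : -1 ≤ u) (hz : ‖z - u‖ ≤ 1) :
    ‖cosSqrt z‖ ≤ Real.exp 2 := by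
  set w := z ^ (2⁻¹ : ℂ)
  have hwz : w ^ 2 = z := Complex.cpow_nat_inv_pow z two_ne_zero
  have h_norm : w.re ^ 2 + w.im ^ 2 = ‖z‖ := by
    rw [← hwz, norm_pow, ← Complex.normSq_eq_norm_sq, Complex.normSq_apply]; ring
  have h_re : w.re ^ 2 - w.im ^ 2 = z.re := by rw [← hwz, sq w, Complex.mul_re]; ring
  have h_norm_le : ‖z‖ ≤ |u| + 1 := by
    simpa using (norm_le_norm_add_norm_sub' z u).trans (add_le_add_right hz _)
  have h_re_ge : u - 1 ≤ z.re := by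
    have := (abs_le.1 ((Complex.abs_re_le_norm (z - u)).trans hz)).1
    simp only [Complex.sub_re, Complex.ofReal_re] at this
    linarith
  refine (norm_cos_le_exp_abs_im w).trans (Real.exp_le_exp.2 (abs_le_of_sq_le_sq ?_ zero_le_two))
  cases abs_cases u <;> linarith

theorem norm_iteratedDeriv_cosSqrt_le (n : ℕ) {u : ℝ} (hu : -1 ≤ u) :
    ‖iteratedDeriv n cosSqrt u‖ ≤ n.factorial * Real.exp 2 := by
  simpa using Complex.norm_iteratedDeriv_le_of_forall_mem_sphere_norm_le n one_pos
    differentiable_cosSqrt.diffContOnCl fun z hz =>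
      norm_cosSqrt_le hu (mem_sphere_iff_norm.1 hz).le

theorem iteratedDeriv_comp_ofReal {f : ℂ → ℂ} (hf : Differentiable ℂ f) (n : ℕ) :
    iteratedDeriv n (fun u : ℝ => f u) = fun u : ℝ => iteratedDeriv n f u := by
  induction n with
  | zero => simp
  | succ n ih =>
    ext u
    rw [iteratedDeriv_succ, iteratedDeriv_succ, ih]
    exact ((hf.contDiff.differentiable_iteratedDeriv n (WithTop.coe_lt_top _)) u)
      |>.hasDerivAt.comp_ofReal.deriv

theorem hasTemperateGrowth_comp_of_forall_iteratedDeriv_le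
    {E : Type*} [NormedAddCommGroup E] [NormedSpace ℝ E] {f : ℂ → ℂ} (hf : Differentiable ℂ f)
    {a : ℝ} (hb : ∀ n, ∃ B, ∀ u : ℝ, a ≤ u → ‖iteratedDeriv n f u‖ ≤ B)
    {ψ : E → ℝ} (hψ : ψ.HasTemperateGrowth) (ha : ∀ x, a ≤ ψ x) :
    (fun x => f (ψ x)).HasTemperateGrowth := by
  have hf' : ContDiff ℝ ∞ fun u : ℝ => f u :=
    (hf.contDiff.restrict_scalars ℝ).comp Complex.ofRealCLM.contDiff
  choose B hB using hb
  have hB₀ : ∀ n, 0 ≤ B n := fun n => (norm_nonneg _).trans (hB n a le_rfl)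
  refine Function.HasTemperateGrowth.comp' (g := fun u : ℝ => f u) (t := Ici a)
    (range_subset_iff.2 ha) (uniqueDiffOn_Ici a) hf'.contDiffOn (fun N => ?_) hψ
  refine ⟨0, ∑ n ∈ Finset.range (N + 1), B n, Finset.sum_nonneg fun n _ => hB₀ n, ?_⟩
  intro n hn u hu
  rw [iteratedFDerivWithin_eq_iteratedFDeriv (uniqueDiffOn_Ici a)
    (hf'.contDiffAt.of_le (mod_cast le_top)) hu, norm_iteratedFDeriv_eq_norm_iteratedDeriv,
    iteratedDeriv_comp_ofReal hf, pow_zero, mul_one]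
  exact (hB n u hu).trans (Finset.single_le_sum (fun n _ => hB₀ n) (by simp; omega))

theorem hasTemperateGrowth_smoothTransition : Real.smoothTransition.HasTemperateGrowth := by
  have h_smooth : ContDiff ℝ ∞ Real.smoothTransition := Real.smoothTransition.contDiff
  have h_deriv : HasCompactSupport (fderiv ℝ Real.smoothTransition) := by
    refine HasCompactSupport.intro (isCompact_Icc (a := 0) (b := 1)) fun x hx => ?_
    rcases not_and_or.1 hx with hx | hx <;> rw [not_le] at hx
    · have : Real.smoothTransition =ᶠ[𝓝 x] fun _ => 0 := by
        filter_upwards [gt_mem_nhds hx] with y hy using Real.smoothTransition.zero_of_nonpos hy.le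
      simp [this.fderiv_eq]
    · have : Real.smoothTransition =ᶠ[𝓝 x] fun _ => 1 := by
        filter_upwards [lt_mem_nhds hx] with y hy using Real.smoothTransition.one_of_one_le hy.le
      simp [this.fderiv_eq]
  refine .of_fderiv (h_deriv.hasTemperateGrowth (h_smooth.fderiv_right (by simp)))
    (h_smooth.differentiable (by simp)) (k := 0) (C := 1) fun x => ?_
  simpa [abs_of_nonneg (Real.smoothTransition.nonneg x)] using Real.smoothTransition.le_one x

/-- Temperate extensions to `ℝ` of the functions `cos √u` and `sin √u / √u`, `u ≥ 0`. -/
theorem exists_hasTemperateGrowth_cosSqrt : ∃ C S : ℝ → ℂ,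
    C.HasTemperateGrowth ∧ S.HasTemperateGrowth ∧
      ∀ s : ℝ, Complex.exp (s * Complex.I) = C (s ^ 2) + s * S (s ^ 2) * Complex.I := by
  -- the cut-off `ψ` keeps the argument in the half-line where `cosSqrt` has bounded derivatives
  let ψ : ℝ → ℝ := fun u => u * Real.smoothTransition (u + 1)
  have hψ : ψ.HasTemperateGrowth := by
    have h₁ : (fun u : ℝ => u + 1).HasTemperateGrowth := by fun_prop
    have h₂ : (fun u : ℝ => Real.smoothTransition (u + 1)).HasTemperateGrowth :=
      hasTemperateGrowth_smoothTransition.comp h₁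
    fun_prop
  have hψ_ge : ∀ u, -1 ≤ ψ u := fun u => by
    have h₀ := Real.smoothTransition.nonneg (u + 1)
    have h₁ := Real.smoothTransition.le_one (u + 1)
    rcases le_total u (-1) with hu | hu
    · simp [ψ, Real.smoothTransition.zero_of_nonpos (show u + 1 ≤ 0 by linarith)]
    · simp only [ψ]; nlinarith
  have hψ_sq : ∀ s : ℝ, ψ (s ^ 2) = s ^ 2 := fun s => by
    simp [ψ, Real.smoothTransition.one_of_one_le (show 1 ≤ s ^ 2 + 1 by linarith [sq_nonneg s])]
  have h_bound n : ∀ u : ℝ, -1 ≤ u → _ := fun u hu => norm_iteratedDeriv_cosSqrt_le n hu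
  refine ⟨fun u => cosSqrt (ψ u), fun u => -2 * deriv cosSqrt (ψ u), ?_, ?_, fun s => ?_⟩
  · exact hasTemperateGrowth_comp_of_forall_iteratedDeriv_le differentiable_cosSqrt
      (fun n => ⟨_, h_bound n⟩) hψ hψ_ge
  · have h := hasTemperateGrowth_comp_of_forall_iteratedDeriv_le differentiable_cosSqrt.deriv
      (fun n => ⟨_, by simpa only [iteratedDeriv_succ'] using h_bound (n + 1)⟩) hψ hψ_ge
    fun_prop
  · simp only [hψ_sq, Complex.ofReal_pow, mul_deriv_cosSqrt_sq, cosSqrt_sq, Complex.exp_mul_I]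

end CosSqrt

section ParametricIntegral

universe u

theorem hasTemperateGrowth_fderiv {E F : Type*} [NormedAddCommGroup E] [NormedSpace ℝ E]
    [NormedAddCommGroup F] [NormedSpace ℝ F] {K : E → F} (hK : K.HasTemperateGrowth) :
    (fderiv ℝ K).HasTemperateGrowth := by
  refine ⟨hK.1.fderiv_right (by simp), fun n => ?_⟩
  obtain ⟨k, C, h⟩ := hK.2 (n + 1)
  exact ⟨k, C, fun x => norm_iteratedFDeriv_fderiv.trans_le (h x)⟩

theorem exists_norm_le_of_hasTemperateGrowth {E V G : Type*} [NormedAddCommGroup E]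
    [NormedSpace ℝ E] [NormedAddCommGroup V] [NormedSpace ℝ V] [NormedAddCommGroup G]
    [NormedSpace ℝ G] {K : E × V → G} (hK : K.HasTemperateGrowth) :
    ∃ (k : ℕ) (C : ℝ), 0 ≤ C ∧ ∀ e v, ‖K (e, v)‖ ≤ C * (1 + ‖e‖) ^ k * (1 + ‖v‖) ^ k := by
  obtain ⟨k, C, hC, h⟩ := hK.norm_iteratedFDeriv_le_uniform 0
  refine ⟨k, C, hC, fun e v => ?_⟩
  have h_norm : 1 + ‖(e, v)‖ ≤ (1 + ‖e‖) * (1 + ‖v‖) := by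
    rw [Prod.norm_def]
    rcases max_choice ‖e‖ ‖v‖ with h | h <;> rw [h] <;>
      nlinarith [norm_nonneg e, norm_nonneg v, mul_nonneg (norm_nonneg e) (norm_nonneg v)]
  calc ‖K (e, v)‖ ≤ C * (1 + ‖(e, v)‖) ^ k := by simpa using h 0 le_rfl (e, v)
    _ ≤ C * ((1 + ‖e‖) * (1 + ‖v‖)) ^ k := by gcongr
    _ = C * (1 + ‖e‖) ^ k * (1 + ‖v‖) ^ k := by rw [mul_pow, mul_assoc]

theorem integrable_one_add_norm_pow_mul {V F : Type*} [NormedAddCommGroup V] [MeasurableSpace V]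
    [NormedAddCommGroup F] {μ : Measure V} {ψ : V → F}
    (hψ : ∀ k : ℕ, Integrable (fun v => ‖v‖ ^ k * ‖ψ v‖) μ) (k : ℕ) :
    Integrable (fun v => (1 + ‖v‖) ^ k * ‖ψ v‖) μ := by
  simp only [add_comm (1 : ℝ), add_pow, one_pow, mul_one, Finset.sum_mul]
  refine integrable_finsetSum _ fun m _ => ((hψ m).const_mul (k.choose m)).congr ?_
  exact .of_forall fun v => by ring

variable {E G F' : Type u} {V F : Type*} [NormedAddCommGroup E] [NormedSpace ℝ E]
  [NormedAddCommGroup V] [NormedSpace ℝ V] [NormedAddCommGroup F] [NormedSpace ℝ F]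
  [NormedAddCommGroup G] [NormedSpace ℝ G] [NormedAddCommGroup F'] [NormedSpace ℝ F']
  {K : E × V → G}

theorem exists_norm_bilin_le_of_hasTemperateGrowth (B : G →L[ℝ] F →L[ℝ] F') (ψ : V → F)
    (hK : K.HasTemperateGrowth) :
    ∃ (k : ℕ) (C : ℝ), 0 ≤ C ∧
      ∀ e v, ‖B (K (e, v)) (ψ v)‖ ≤ C * (1 + ‖e‖) ^ k * ((1 + ‖v‖) ^ k * ‖ψ v‖) := by
  obtain ⟨k, C, hC, h⟩ := exists_norm_le_of_hasTemperateGrowth hK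
  refine ⟨k, ‖B‖ * C, by positivity, fun e v => ?_⟩
  calc ‖B (K (e, v)) (ψ v)‖ ≤ ‖B‖ * ‖K (e, v)‖ * ‖ψ v‖ := B.le_opNorm₂ _ _
    _ ≤ ‖B‖ * (C * (1 + ‖e‖) ^ k * (1 + ‖v‖) ^ k) * ‖ψ v‖ := by gcongr; exact h e v
    _ = ‖B‖ * C * (1 + ‖e‖) ^ k * ((1 + ‖v‖) ^ k * ‖ψ v‖) := by ring

theorem hasTemperateGrowth_fderiv_comp_inl (hK : K.HasTemperateGrowth) :
    (fun p => (fderiv ℝ K p).comp (ContinuousLinearMap.inl ℝ E V)).HasTemperateGrowth :=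
  ((ContinuousLinearMap.compL ℝ E (E × V) G).flip
    (ContinuousLinearMap.inl ℝ E V)).hasTemperateGrowth.comp (hasTemperateGrowth_fderiv hK)

variable [SecondCountableTopology V] [MeasurableSpace V] [OpensMeasurableSpace V]
  {μ : Measure V} {ψ : V → F}

theorem aestronglyMeasurable_bilin_temperate (B : G →L[ℝ] F →L[ℝ] F')
    (hm : AEStronglyMeasurable ψ μ) (hK : K.HasTemperateGrowth) (e : E) :
    AEStronglyMeasurable (fun v => B (K (e, v)) (ψ v)) μ :=
  B.aestronglyMeasurable_comp₂
    (hK.1.continuous.comp (Continuous.prodMk_right e)).aestronglyMeasurable hm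

theorem integrable_bilin_temperate (B : G →L[ℝ] F →L[ℝ] F') (hm : AEStronglyMeasurable ψ μ)
    (hψ : ∀ k : ℕ, Integrable (fun v => ‖v‖ ^ k * ‖ψ v‖) μ) (hK : K.HasTemperateGrowth) (e : E) :
    Integrable (fun v => B (K (e, v)) (ψ v)) μ := by
  obtain ⟨k, C, -, h⟩ := exists_norm_bilin_le_of_hasTemperateGrowth B ψ hK
  exact ((integrable_one_add_norm_pow_mul hψ k).const_mul (C * (1 + ‖e‖) ^ k)).mono'
    (aestronglyMeasurable_bilin_temperate B hm hK e) (.of_forall (h e))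

theorem hasFDerivAt_integral_bilin_temperate (B : G →L[ℝ] F →L[ℝ] F')
    (hm : AEStronglyMeasurable ψ μ)
    (hψ : ∀ k : ℕ, Integrable (fun v => ‖v‖ ^ k * ‖ψ v‖) μ) (hK : K.HasTemperateGrowth) (e : E) :
    HasFDerivAt (fun e => ∫ v, B (K (e, v)) (ψ v) ∂μ)
      (∫ v, B.precompL E ((fderiv ℝ K (e, v)).comp (ContinuousLinearMap.inl ℝ E V)) (ψ v) ∂μ)
      e := by
  have hK' := hasTemperateGrowth_fderiv_comp_inl hK
  obtain ⟨k, C, hC, h⟩ := exists_norm_bilin_le_of_hasTemperateGrowth (B.precompL E) ψ hK'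
  refine hasFDerivAt_integral_of_dominated_of_fderiv_le (s := Metric.ball e 1)
    (bound := fun v => C * (2 + ‖e‖) ^ k * ((1 + ‖v‖) ^ k * ‖ψ v‖))
    (Metric.ball_mem_nhds _ one_pos)
    (.of_forall (aestronglyMeasurable_bilin_temperate B hm hK))
    (integrable_bilin_temperate B hm hψ hK e)
    (aestronglyMeasurable_bilin_temperate (B.precompL E) hm hK' e)
    (.of_forall fun v x hx => (h x v).trans ?_)
    ((integrable_one_add_norm_pow_mul hψ k).const_mul _) (.of_forall fun v x _ => ?_)
  · have : 1 + ‖x‖ ≤ 2 + ‖e‖ := by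
      linarith [norm_le_norm_add_norm_sub' x e, mem_ball_iff_norm.1 hx]
    gcongr
  · have hKx : HasFDerivAt (fun x => K (x, v)) _ x :=
      (hK.1.differentiable (by simp) (x, v)).hasFDerivAt.comp x (hasFDerivAt_prodMk_left x v)
    exact (B.flip (ψ v)).hasFDerivAt.comp x hKx

theorem contDiff_integral_bilin_temperate (B : G →L[ℝ] F →L[ℝ] F')
    (hm : AEStronglyMeasurable ψ μ) (hψ : ∀ k : ℕ, Integrable (fun v => ‖v‖ ^ k * ‖ψ v‖) μ)
    (hK : K.HasTemperateGrowth) : ContDiff ℝ ∞ (fun e => ∫ v, B (K (e, v)) (ψ v) ∂μ) := by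
  refine contDiff_infty.2 fun n => ?_
  induction n generalizing G F' with
  | zero =>
    exact contDiff_zero.2 <| continuous_iff_continuousAt.2 fun e =>
      (hasFDerivAt_integral_bilin_temperate B hm hψ hK e).continuousAt
  | succ n ih =>
    have h_deriv := hasFDerivAt_integral_bilin_temperate B hm hψ hK
    push_cast
    refine contDiff_succ_iff_fderiv.2 ⟨fun e => (h_deriv e).differentiableAt, by simp, ?_⟩
    rw [funext fun e => (h_deriv e).fderiv]
    exact ih (B.precompL E) (hasTemperateGrowth_fderiv_comp_inl hK)

end ParametricIntegral

section Whitney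

theorem hasTemperateGrowth_exp_mul_I :
    (fun u : ℝ => Complex.exp (u * Complex.I)).HasTemperateGrowth := by
  obtain ⟨C, S, hC, hS, h⟩ := exists_hasTemperateGrowth_cosSqrt
  have h_sq : (fun u : ℝ => u ^ 2).HasTemperateGrowth := by fun_prop
  have h_coe : (fun u : ℝ => (u : ℂ)).HasTemperateGrowth :=
    Complex.ofRealCLM.hasTemperateGrowth
  rw [funext h]
  exact (hC.comp h_sq).fun_add ((h_coe.fun_mul (hS.comp h_sq)).fun_mul (.const _))

variable {E : Type} [NormedAddCommGroup E] [InnerProductSpace ℝ E]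

/-- The splitting is that of `cos` and `sin` in the last variable, in which they are even and
odd. -/
theorem exists_even_odd_fourier_kernel :
    ∃ K₀ K₁ : (E × ℝ) × WithLp 2 (E × ℝ) → ℂ, K₀.HasTemperateGrowth ∧ K₁.HasTemperateGrowth ∧
      ∀ x s v, Complex.exp (↑(2 * Real.pi * inner ℝ v (WithLp.toLp 2 (x, s))) * Complex.I) =
        K₀ ((x, s ^ 2), v) + s * K₁ ((x, s ^ 2), v) := by
  obtain ⟨C, S, hC, hS, hCS⟩ := exists_hasTemperateGrowth_cosSqrt
  let V := WithLp 2 (E × ℝ)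
  let π₁ : (E × ℝ) × V →L[ℝ] E := .comp (.fst ℝ E ℝ) (.fst ℝ (E × ℝ) V)
  let π₂ : (E × ℝ) × V →L[ℝ] ℝ := .comp (.snd ℝ E ℝ) (.fst ℝ (E × ℝ) V)
  let ξ₁ : (E × ℝ) × V →L[ℝ] E := .comp (WithLp.fstL 2 ℝ E ℝ) (.snd ℝ (E × ℝ) V)
  let ξ₂ : (E × ℝ) × V →L[ℝ] ℝ := .comp (WithLp.sndL 2 ℝ E ℝ) (.snd ℝ (E × ℝ) V)
  let phase : (E × ℝ) × V → ℂ := fun y =>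
    Complex.exp (↑(2 * Real.pi * inner ℝ (ξ₁ y) (π₁ y)) * Complex.I)
  let freq : (E × ℝ) × V → ℝ := fun y => 2 * Real.pi * ξ₂ y
  have h_freq : freq.HasTemperateGrowth := by fun_prop
  have h_arg : (fun y => π₂ y * freq y ^ 2).HasTemperateGrowth := by fun_prop
  have h_inner : (fun y => 2 * Real.pi * inner ℝ (ξ₁ y) (π₁ y)).HasTemperateGrowth :=
    (Function.HasTemperateGrowth.const _).fun_mul
      ((innerSL ℝ).bilinear_hasTemperateGrowth ξ₁.hasTemperateGrowth π₁.hasTemperateGrowth)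
  have h_phase : phase.HasTemperateGrowth := hasTemperateGrowth_exp_mul_I.comp h_inner
  have h_coe : (fun y => (freq y : ℂ)).HasTemperateGrowth :=
    Complex.ofRealCLM.hasTemperateGrowth.comp h_freq
  refine ⟨fun y => phase y * C (π₂ y * freq y ^ 2),
    fun y => phase y * (freq y * S (π₂ y * freq y ^ 2) * Complex.I),
    h_phase.fun_mul (hC.comp h_arg),
    h_phase.fun_mul ((h_coe.fun_mul (hS.comp h_arg)).fun_mul (.const _)), fun x s v => ?_⟩
  have h_split : (↑(2 * Real.pi * inner ℝ v (WithLp.toLp 2 (x, s))) : ℂ) * Complex.I =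
      ↑(2 * Real.pi * inner ℝ v.fst x) * Complex.I + ↑(s * (2 * Real.pi * v.snd)) * Complex.I := by
    have h_inner : inner ℝ v (WithLp.toLp 2 (x, s)) = inner ℝ v.fst x + s * v.snd := rfl
    rw [h_inner]
    push_cast
    ring
  have h_sq : (s * (2 * Real.pi * v.snd)) ^ 2 = s ^ 2 * (2 * Real.pi * v.snd) ^ 2 := mul_pow _ _ _
  rw [h_split, Complex.exp_add, hCS (s * _), h_sq]
  change _ = Complex.exp (↑(2 * Real.pi * inner ℝ v.fst x) * Complex.I) *
      C (s ^ 2 * (2 * Real.pi * v.snd) ^ 2) +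
    s * (Complex.exp (↑(2 * Real.pi * inner ℝ v.fst x) * Complex.I) *
      (↑(2 * Real.pi * v.snd) * S (s ^ 2 * (2 * Real.pi * v.snd) ^ 2) * Complex.I))
  push_cast
  ring

variable [FiniteDimensional ℝ E]

open FourierTransform in
theorem exists_schwartz_fourier_representation [MeasurableSpace E] [BorelSpace E]
    {g : E → ℝ} (hg : ContDiff ℝ ∞ g) (hgs : HasCompactSupport g) : ∃ H : SchwartzMap E ℂ,
      ∀ w, (g w : ℂ) = ∫ v, Complex.exp (↑(2 * Real.pi * inner ℝ v w) * Complex.I) • H v := by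
  have h_smooth : ContDiff ℝ ∞ fun w => (g w : ℂ) := Complex.ofRealCLM.contDiff.comp hg
  have h_supp : HasCompactSupport fun w => (g w : ℂ) :=
    hgs.comp_left (g := fun x : ℝ => (x : ℂ)) Complex.ofReal_zero
  let G : SchwartzMap E ℂ := h_supp.toSchwartzMap h_smooth
  refine ⟨𝓕 G, fun w => ?_⟩
  have inversion : (𝓕⁻ (𝓕 G)) w = G w := by rw [FourierTransform.fourierInv_fourier_eq G]
  rw [SchwartzMap.fourierInv_coe, Real.fourierInv_eq'] at inversion
  exact inversion.symm

theorem exists_even_odd_of_hasCompactSupport {g : E × ℝ → ℝ} (hg : ContDiff ℝ ∞ g)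
    (hgs : HasCompactSupport g) : ∃ p q : E × ℝ → ℝ, ContDiff ℝ ∞ p ∧ ContDiff ℝ ∞ q ∧
      ∀ x s, g (x, s) = p (x, s ^ 2) + s * q (x, s ^ 2) := by
  let _ : MeasurableSpace E := borel E
  have : BorelSpace E := ⟨rfl⟩
  obtain ⟨K₀, K₁, hK₀, hK₁, h_split⟩ := exists_even_odd_fourier_kernel (E := E)
  let V := WithLp 2 (E × ℝ)
  let ι : V ≃L[ℝ] E × ℝ := WithLp.prodContinuousLinearEquiv 2 ℝ E ℝ
  obtain ⟨H, hH⟩ := exists_schwartz_fourier_representation (hg.comp ι.contDiff)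
    (hgs.comp_homeomorph ι.toHomeomorph)
  have hHm : AEStronglyMeasurable H (volume : Measure V) := H.continuous.aestronglyMeasurable
  have hHi : ∀ k : ℕ, Integrable (fun v => ‖v‖ ^ k * ‖H v‖) := H.integrable_pow_mul volume
  let B := ContinuousLinearMap.lsmul ℝ ℂ (E := ℂ)
  refine ⟨fun e => (∫ v, K₀ (e, v) • H v).re, fun e => (∫ v, K₁ (e, v) • H v).re,
    Complex.reCLM.contDiff.comp (contDiff_integral_bilin_temperate B hHm hHi hK₀),
    Complex.reCLM.contDiff.comp (contDiff_integral_bilin_temperate B hHm hHi hK₁),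
    fun x s => ?_⟩
  have h_int₀ : Integrable fun v => K₀ ((x, s ^ 2), v) • H v :=
    integrable_bilin_temperate B hHm hHi hK₀ _
  have h_int₁ : Integrable fun v => K₁ ((x, s ^ 2), v) • H v :=
    integrable_bilin_temperate B hHm hHi hK₁ _
  have h : (g (x, s) : ℂ) = _ := hH (WithLp.toLp 2 (x, s))
  simp only [h_split, add_smul, mul_smul] at h
  rw [integral_add h_int₀ (h_int₁.fun_smul (s : ℂ)), integral_smul] at h
  simpa using congrArg Complex.re h

end Whitney

section SmoothNear

variable {E F G : Type*} [NormedAddCommGroup E] [NormedSpace ℝ E]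
  [NormedAddCommGroup F] [NormedSpace ℝ F] [NormedAddCommGroup G] [NormedSpace ℝ G]

/-- `f` is `C^∞` on a neighbourhood of `x`. This is stronger than `ContDiffAt ℝ ∞ f x`, which
provides for each finite order a neighbourhood depending on that order. -/
def SmoothNear (f : E → F) (x : E) : Prop := ∀ᶠ y in 𝓝 x, ContDiffAt ℝ ∞ f y

theorem smoothNear_of_contDiffOn {f : E → F} {U : Set E} (h : ContDiffOn ℝ ∞ f U)
    (hU : IsOpen U) {x : E} (hx : x ∈ U) : SmoothNear f x := by
  filter_upwards [hU.mem_nhds hx] with y hy using h.contDiffAt (hU.mem_nhds hy)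

theorem smoothNear_of_contDiff {f : E → F} (h : ContDiff ℝ ∞ f) (x : E) : SmoothNear f x :=
  .of_forall fun _ => h.contDiffAt

namespace SmoothNear

theorem eventually {f : E → F} {x : E} (h : SmoothNear f x) : ∀ᶠ y in 𝓝 x, SmoothNear f y :=
  eventually_eventually_nhds.2 h

theorem contDiffAt {f : E → F} {x : E} (h : SmoothNear f x) : ContDiffAt ℝ ∞ f x :=
  Eventually.self_of_nhds h

theorem continuousAt {f : E → F} {x : E} (h : SmoothNear f x) : ContinuousAt f x :=
  h.contDiffAt.continuousAt

theorem differentiableAt {f : E → F} {x : E} (h : SmoothNear f x) : DifferentiableAt ℝ f x :=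
  h.contDiffAt.differentiableAt (by simp)

theorem comp {g : F → G} {f : E → F} {x : E} (hg : SmoothNear g (f x)) (hf : SmoothNear f x) :
    SmoothNear (fun y => g (f y)) x := by
  filter_upwards [hf, hf.continuousAt.eventually hg] with y h₁ h₂ using h₂.comp y h₁

theorem comp_of_eq {g : F → G} {f : E → F} {x : E} {z : F} (hg : SmoothNear g z)
    (hf : SmoothNear f x) (h : f x = z) : SmoothNear (fun y => g (f y)) x :=
  comp (h ▸ hg) hf

theorem fderiv {f : E → F} {x : E} (hf : SmoothNear f x) : SmoothNear (fderiv ℝ f) x := by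
  filter_upwards [hf] with y hy using hy.fderiv_right (m := ∞) (by simp)

theorem deriv {f : ℝ → F} {x : ℝ} (hf : SmoothNear f x) : SmoothNear (deriv f) x := by
  filter_upwards [hf.fderiv] with y hy using hy.clm_apply contDiffAt_const

theorem exists_contDiff_hasCompactSupport [FiniteDimensional ℝ E] {f : E → F} {x : E}
    (hf : SmoothNear f x) :
    ∃ g : E → F, ContDiff ℝ ∞ g ∧ HasCompactSupport g ∧ g =ᶠ[𝓝 x] f := by
  obtain ⟨r, hr, h_ball⟩ := Metric.eventually_nhds_iff_ball.1 hf
  let b : ContDiffBump x := ⟨r / 4, r / 2, by positivity, by linarith⟩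
  refine ⟨fun y => b y • f y, contDiff_iff_contDiffAt.2 fun y => ?_,
    b.hasCompactSupport.smul_right, ?_⟩
  · by_cases hy : y ∈ Metric.ball x r
    · exact b.contDiff.contDiffAt.smul (h_ball y hy)
    · have hy' : y ∉ tsupport b := by
        rw [b.tsupport_eq, Metric.mem_closedBall, not_le]
        exact (half_lt_self hr).trans_le (not_lt.1 hy)
      have h_zero : (fun z => b z • f z) =ᶠ[𝓝 y] fun _ => 0 := by
        filter_upwards [notMem_tsupport_iff_eventuallyEq.1 hy'] with z hz
        simp [hz]
      exact contDiffAt_const.congr_of_eventuallyEq h_zero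
  · filter_upwards [b.eventuallyEq_one] with y hy
    simp [hy]

end SmoothNear

end SmoothNear

section Taylor

open scoped Nat

universe u

variable {E F : Type u} [NormedAddCommGroup E] [NormedSpace ℝ E]
  [NormedAddCommGroup F] [NormedSpace ℝ F]

theorem contDiff_hasCompactSupport_iteratedDeriv_snd {f : E × ℝ → F} (hf : ContDiff ℝ ∞ f)
    (hfs : HasCompactSupport f) (n : ℕ) :
    ContDiff ℝ ∞ (fun p : E × ℝ => iteratedDeriv n (fun s => f (p.1, s)) p.2) ∧
      HasCompactSupport fun p : E × ℝ => iteratedDeriv n (fun s => f (p.1, s)) p.2 := by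
  induction n generalizing f with
  | zero => simpa using ⟨hf, hfs⟩
  | succ n ih =>
    let f' : E × ℝ → F := fun p => fderiv ℝ f p (0, 1)
    have h_deriv (x : E) : deriv (fun s => f (x, s)) = fun s => f' (x, s) := by
      ext s
      have h_line : HasDerivAt (fun u : ℝ => (x, u)) (0, 1) s :=
        (hasDerivAt_const s x).prodMk (hasDerivAt_id s)
      exact ((hf.differentiable (by simp) _).hasFDerivAt.comp_hasDerivAt s h_line).deriv
    simp only [iteratedDeriv_succ', h_deriv]
    exact ih ((hf.fderiv_right (m := ∞) (by simp)).clm_apply contDiff_const)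
      ((hfs.fderiv (𝕜 := ℝ)).comp_left (g := fun L : E × ℝ →L[ℝ] F => L (0, 1)) (by simp))

variable [CompleteSpace F]

theorem exists_contDiff_taylor_remainder {f : E × ℝ → F} (hf : ContDiff ℝ ∞ f)
    (hfs : HasCompactSupport f) (n : ℕ) :
    ∃ R : E × ℝ → F, ContDiff ℝ ∞ R ∧ ∀ x s, f (x, s) =
      ∑ k ∈ Finset.range (n + 1), (s ^ k / k !) • iteratedDeriv k (fun s => f (x, s)) 0 +
        s ^ (n + 1) • R (x, s) := by
  let D : E × ℝ → F := fun p => iteratedDeriv (n + 1) (fun s => f (p.1, s)) p.2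
  obtain ⟨hD, hDs⟩ := contDiff_hasCompactSupport_iteratedDeriv_snd hf hfs (n + 1)
  let K : (E × ℝ) × ℝ → F := fun y => D (y.1.1, y.2 * y.1.2)
  have h_arg : (fun y : (E × ℝ) × ℝ => (y.1.1, y.2 * y.1.2)).HasTemperateGrowth := by
    let π : (E × ℝ) × ℝ →L[ℝ] E × ℝ := .fst ℝ (E × ℝ) ℝ
    have h_mul := (ContinuousLinearMap.snd ℝ (E × ℝ) ℝ).hasTemperateGrowth.fun_mul
      ((ContinuousLinearMap.snd ℝ E ℝ).comp π).hasTemperateGrowth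
    have h_sum := ((ContinuousLinearMap.inl ℝ E ℝ).comp
      ((ContinuousLinearMap.fst ℝ E ℝ).comp π)).hasTemperateGrowth.add
        ((ContinuousLinearMap.inr ℝ E ℝ).hasTemperateGrowth.comp h_mul)
    simpa [Pi.add_def, π] using h_sum
  have hK : K.HasTemperateGrowth := (hDs.hasTemperateGrowth hD).comp h_arg
  have h_weight (k : ℕ) : Integrable (fun u : ℝ => ‖u‖ ^ k * ‖(1 - u) ^ n‖)
      (volume.restrict (Ioc 0 1)) :=
    (Continuous.integrableOn_Icc (by fun_prop)).mono_set Ioc_subset_Icc_self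
  have hR := contDiff_integral_bilin_temperate (ContinuousLinearMap.lsmul ℝ ℝ (E := F)).flip
    (by fun_prop) h_weight hK
  refine ⟨_, hR.const_smul (n ! : ℝ)⁻¹, fun x s => ?_⟩
  have h_slice : ContDiff ℝ (n + 1) fun s => f (x, s) :=
    (hf.comp (contDiff_prodMk_right x)).of_le (mod_cast le_top)
  have h_taylor := map_add_eq_sum_add_integral_iteratedFDeriv (f := fun s => f (x, s)) (x := 0)
    (y := s) (n := n) fun _ _ => h_slice.contDiffAt
  simp only [iteratedFDeriv_apply_eq_iteratedDeriv_mul_prod, Finset.prod_const, Finset.card_univ,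
    Fintype.card_fin, zero_add, smul_eq_mul, smul_comm _ (s ^ (n + 1)),
    integral_smul, intervalIntegral.integral_of_le zero_le_one] at h_taylor
  simp only [div_eq_inv_mul, mul_smul]
  exact h_taylor

theorem SmoothNear.exists_taylor_remainder [FiniteDimensional ℝ E] {f : E × ℝ → F} {x : E}
    (hf : SmoothNear f (x, 0)) (n : ℕ) :
    ∃ R : E × ℝ → F, SmoothNear R (x, 0) ∧ ∀ᶠ p in 𝓝 (x, (0 : ℝ)), f p =
      ∑ k ∈ Finset.range (n + 1), (p.2 ^ k / k !) • iteratedDeriv k (fun s => f (p.1, s)) 0 +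
        p.2 ^ (n + 1) • R p := by
  obtain ⟨g, hg, hgs, hgf⟩ := hf.exists_contDiff_hasCompactSupport
  obtain ⟨R, hR, h⟩ := exists_contDiff_taylor_remainder hg hgs n
  refine ⟨R, smoothNear_of_contDiff hR _, ?_⟩
  have h_slices : ∀ᶠ p in 𝓝 (x, (0 : ℝ)), (fun s => g (p.1, s)) =ᶠ[𝓝 0] fun s => f (p.1, s) := by
    have h_zero : ContinuousAt (fun p : E × ℝ => (p.1, (0 : ℝ))) (x, 0) := by fun_prop
    filter_upwards [h_zero.eventually (eventually_eventually_nhds.2 hgf)] with p hp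
    exact (Continuous.prodMk_right p.1).continuousAt.eventually hp
  filter_upwards [hgf, h_slices] with p hp hp'
  simp only [← hp, ← hp'.iteratedDeriv_eq]
  exact h p.1 p.2

theorem SmoothNear.exists_eq_add_smul [FiniteDimensional ℝ E] {f : E × ℝ → F} {x : E}
    (hf : SmoothNear f (x, 0)) : ∃ g : E × ℝ → F, SmoothNear g (x, 0) ∧
      ∀ᶠ p in 𝓝 (x, (0 : ℝ)), f p = f (p.1, 0) + p.2 • g p := by
  simpa using hf.exists_taylor_remainder 0

end Taylor

section GermEquiv

variable {E E' E'' F F' F'' : Type*} [NormedAddCommGroup E] [NormedSpace ℝ E]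
  [NormedAddCommGroup E'] [NormedSpace ℝ E'] [NormedAddCommGroup E''] [NormedSpace ℝ E'']
  [NormedAddCommGroup F] [NormedSpace ℝ F] [NormedAddCommGroup F'] [NormedSpace ℝ F']
  [NormedAddCommGroup F''] [NormedSpace ℝ F'']

/-- The germ of `σ` at `p` is the germ of a `C^∞` diffeomorphism: it has a two-sided `C^∞` inverse
germ at `σ p`. -/
def IsGermDiffeo (σ : E → F) (p : E) : Prop :=
  SmoothNear σ p ∧ ∃ ρ : F → E, SmoothNear ρ (σ p) ∧ (∀ᶠ x in 𝓝 p, ρ (σ x) = x) ∧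
    ∀ᶠ y in 𝓝 (σ p), σ (ρ y) = y

namespace IsGermDiffeo

theorem of_contDiff {σ : E → F} {ρ : F → E} (hσ : ContDiff ℝ ∞ σ) (hρ : ContDiff ℝ ∞ ρ)
    (h_left : ∀ x, ρ (σ x) = x) (h_right : ∀ y, σ (ρ y) = y) (p : E) : IsGermDiffeo σ p :=
  ⟨smoothNear_of_contDiff hσ p, ρ, smoothNear_of_contDiff hρ _, .of_forall h_left,
    .of_forall h_right⟩

theorem refl (p : E) : IsGermDiffeo (fun x => x) p :=
  of_contDiff contDiff_id contDiff_id (fun _ => rfl) (fun _ => rfl) p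

theorem comp {τ : F → F'} {σ : E → F} {p : E} (hτ : IsGermDiffeo τ (σ p))
    (hσ : IsGermDiffeo σ p) : IsGermDiffeo (fun x => τ (σ x)) p := by
  obtain ⟨hσs, ρ, hρs, hρσ, hσρ⟩ := hσ
  obtain ⟨hτs, ς, hςs, hςτ, hτς⟩ := hτ
  have h_base : ς (τ (σ p)) = σ p := hςτ.self_of_nhds
  have h_tendsto : Tendsto ς (𝓝 (τ (σ p))) (𝓝 (σ p)) := by
    simpa only [ContinuousAt, h_base] using hςs.continuousAt
  refine ⟨hτs.comp hσs, fun z => ρ (ς z), hρs.comp_of_eq hςs h_base, ?_, ?_⟩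
  · filter_upwards [hρσ, hσs.continuousAt.eventually hςτ] with x h₁ h₂
    rw [h₂, h₁]
  · filter_upwards [hτς, h_tendsto.eventually hσρ] with z h₁ h₂
    rw [h₂, h₁]

theorem of_hasFDerivAt [CompleteSpace E] {σ : E → F} {p : E} (hσ : SmoothNear σ p) {L : E ≃L[ℝ] F}
    (hL : HasFDerivAt σ (L : E →L[ℝ] F) p) : IsGermDiffeo σ p := by
  let e := hσ.contDiffAt.toOpenPartialHomeomorph σ hL (by simp)
  have he : ⇑e = σ := hσ.contDiffAt.toOpenPartialHomeomorph_coe hL (by simp)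
  have hp : p ∈ e.source := hσ.contDiffAt.mem_toOpenPartialHomeomorph_source hL (by simp)
  have hσp : σ p ∈ e.target := he ▸ e.map_source hp
  have h_base : e.symm (σ p) = p := he ▸ e.left_inv hp
  have h_invertible : ∀ᶠ x in 𝓝 p, fderiv ℝ σ x ∈ range ((↑) : (E ≃L[ℝ] F) → E →L[ℝ] F) :=
    hσ.fderiv.continuousAt.eventually (by rw [hL.fderiv]; exact ContinuousLinearEquiv.nhds L)
  have h_symm : Tendsto e.symm (𝓝 (σ p)) (𝓝 p) := by
    simpa only [ContinuousAt, h_base] using e.symm.continuousAt hσp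
  refine ⟨hσ, e.symm, ?_, he ▸ e.eventually_left_inverse hp, he ▸ e.eventually_right_inverse hσp⟩
  filter_upwards [e.open_target.mem_nhds hσp, h_symm.eventually (hσ.and h_invertible)]
    with y hy ⟨h_smooth, M, hM⟩
  refine e.contDiffAt_symm (f₀' := M) hy ?_ (he ▸ h_smooth)
  rw [he, hM]
  exact (h_smooth.differentiableAt (by simp)).hasFDerivAt

theorem of_injective [FiniteDimensional ℝ E] [FiniteDimensional ℝ F]
    (h_dim : Module.finrank ℝ E = Module.finrank ℝ F) {σ : E → F} {p : E} (hσ : SmoothNear σ p)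
    {L : E →L[ℝ] F} (hL : HasFDerivAt σ L p) (h_inj : ∀ v, L v = 0 → v = 0) :
    IsGermDiffeo σ p := by
  have := FiniteDimensional.complete ℝ E
  have h_inj' : Function.Injective (L : E →ₗ[ℝ] F) := (injective_iff_map_eq_zero _).2 h_inj
  exact of_hasFDerivAt hσ
    (L := (LinearEquiv.ofInjectiveOfFinrankEq _ h_inj' h_dim).toContinuousLinearEquiv) hL

theorem prodMk_snd [FiniteDimensional ℝ E] {h : ℝ × E → ℝ} {x : ℝ} {w : E}
    (hh : SmoothNear h (x, w)) (h_deriv : deriv (fun u => h (u, w)) x ≠ 0) :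
    IsGermDiffeo (fun p => (h p, p.2)) (x, w) := by
  have h_prod := hh.differentiableAt.hasFDerivAt.prodMk (hasFDerivAt_snd (p := (x, w)))
  refine of_injective rfl ?_ h_prod fun ⟨ξ, η⟩ h_zero => ?_
  · filter_upwards [hh] with p hp using hp.prodMk contDiffAt_snd
  · have hη : η = 0 := congrArg Prod.snd h_zero
    subst hη
    have h_line := (hh.differentiableAt.hasFDerivAt.comp_hasDerivAt x
      ((hasDerivAt_id x).prodMk (hasDerivAt_const x w))).deriv
    have h_fst : ξ * deriv (fun u => h (u, w)) x = 0 := by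
      rw [← smul_eq_mul, show deriv (fun u => h (u, w)) x = _ from h_line, ← map_smul]
      simpa using congrArg Prod.fst h_zero
    simpa [h_deriv] using h_fst

theorem exists_smoothDiffeoOn {σ : E → F} {p : E} (h : IsGermDiffeo σ p) {N : Set E}
    (hN : N ∈ 𝓝 p) : ∃ U ⊆ N, p ∈ U ∧ SmoothDiffeoOn σ U := by
  obtain ⟨hσ, ρ, hρ, hρσ, hσρ⟩ := h
  obtain ⟨A, hA, hA_open, hpA⟩ := eventually_nhds_iff.1 ((hσ.and hρσ).and hN)
  obtain ⟨B, hB, hB_open, hpB⟩ := eventually_nhds_iff.1 (hρ.and hσρ)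
  have hσA : ContDiffOn ℝ ∞ σ A := fun x hx => (hA x hx).1.1.contDiffWithinAt
  have hρB : ContDiffOn ℝ ∞ ρ B := fun y hy => (hB y hy).1.contDiffWithinAt
  have h_image : σ '' (A ∩ σ ⁻¹' B) = B ∩ ρ ⁻¹' A := by
    ext y
    constructor
    · rintro ⟨x, ⟨hxA, hxB⟩, rfl⟩
      exact ⟨hxB, by rwa [mem_preimage, (hA x hxA).1.2]⟩
    · rintro ⟨hyB, hyA⟩
      exact ⟨ρ y, ⟨hyA, by rwa [mem_preimage, (hB y hyB).2]⟩, (hB y hyB).2⟩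
  refine ⟨A ∩ σ ⁻¹' B, fun x hx => (hA x hx.1).2, ⟨hpA, hpB⟩,
    hσA.continuousOn.isOpen_inter_preimage hA_open hB_open, ?_, hσA.mono inter_subset_left, ρ, ?_,
    fun x hx => (hA x hx.1).1.2⟩
  · rw [h_image]
    exact hρB.continuousOn.isOpen_inter_preimage hB_open hA_open
  · rw [h_image]
    exact hρB.mono inter_subset_left

end IsGermDiffeo

/-- Right-left equivalence of map-germs. Sources and targets may be different spaces, so that
normal forms can be compared in products of lines as well as in coordinate spaces. -/
def GermEquiv (f : E → F) (p : E) (g : E' → F') (q : E') : Prop :=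
  ∃ (σ : E → E') (τ : F → F'), IsGermDiffeo σ p ∧ IsGermDiffeo τ (f p) ∧ σ p = q ∧
    ∀ᶠ x in 𝓝 p, τ (f x) = g (σ x)

namespace GermEquiv

theorem trans {f : E → F} {p : E} {g : E' → F'} {q : E'} {h : E'' → F''} {r : E''}
    (hfg : GermEquiv f p g q) (hgh : GermEquiv g q h r) : GermEquiv f p h r := by
  obtain ⟨σ, τ, hσ, hτ, rfl, h_eq⟩ := hfg
  obtain ⟨σ', τ', hσ', hτ', rfl, h_eq'⟩ := hgh
  refine ⟨fun x => σ' (σ x), fun y => τ' (τ y), hσ'.comp hσ,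
    IsGermDiffeo.comp (by rwa [h_eq.self_of_nhds]) hτ, rfl, ?_⟩
  filter_upwards [h_eq, hσ.1.continuousAt.eventually h_eq'] with x hx hx'
  rw [hx, hx']

theorem germDiffeomorphic {f g : E → F} {p q : E} (h : GermEquiv f p g q)
    (hf : ContinuousAt f p) : GermDiffeomorphic f p g q := by
  obtain ⟨σ, τ, hσ, hτ, h_base, h_eq⟩ := h
  obtain ⟨V, -, hpV, hV⟩ := hτ.exists_smoothDiffeoOn univ_mem
  obtain ⟨U, hUN, hpU, hU⟩ := hσ.exists_smoothDiffeoOn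
    (inter_mem h_eq (hf.preimage_mem_nhds (hV.1.mem_nhds hpV)))
  exact ⟨U, V, σ, τ, hU, hV, hpU, hpV, h_base, h_base ▸ h_eq.self_of_nhds,
    fun x hx => (hUN hx).2, fun x hx => (hUN hx).1⟩

end GermEquiv

end GermEquiv

section NormalForms

theorem germEquiv_folded_umbrella :
    GermEquiv (fun p : ℝ × ℝ => (p.1, p.2 ^ 2, p.1 * p.2 ^ 3)) (0, 0)
      (fun p : ℝ × ℝ => ![p.1 + p.2, p.1 ^ 2 + 2 * p.2 * p.1, p.1 ^ 4 + 4 * p.2 * p.1 ^ 3])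
      ((0 : ℝ), (0 : ℝ)) := by
  let σ (p : ℝ × ℝ) : ℝ × ℝ := (p.1 - p.2, p.2)
  let τ (y : ℝ × ℝ × ℝ) : Fin 3 → ℝ := ![y.1, y.1 ^ 2 - y.2.1,
    y.1 ^ 4 - 6 * y.1 ^ 2 * y.2.1 - 3 * y.2.1 ^ 2 + 8 * y.2.2]
  let τ' (v : Fin 3 → ℝ) : ℝ × ℝ × ℝ := (v 0, v 0 ^ 2 - v 1,
    (v 2 - v 0 ^ 4 + 6 * v 0 ^ 2 * (v 0 ^ 2 - v 1) + 3 * (v 0 ^ 2 - v 1) ^ 2) / 8)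
  have hτ : ContDiff ℝ ∞ τ := by
    refine contDiff_pi.2 fun i => ?_
    fin_cases i <;> dsimp [τ] <;> fun_prop
  have h_left (y : ℝ × ℝ × ℝ) : τ' (τ y) = y := by
    ext <;> simp [τ, τ']
    ring
  have h_right (v : Fin 3 → ℝ) : τ (τ' v) = v := by
    ext i
    fin_cases i <;> simp [τ, τ']
    ring
  refine ⟨σ, τ, .of_contDiff (ρ := fun p => (p.1 + p.2, p.2)) (by fun_prop) (by fun_prop)
    (by simp [σ]) (by simp [σ]) _, .of_contDiff hτ (by fun_prop) h_left h_right _, by simp [σ],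
    .of_forall fun p => ?_⟩
  ext i
  fin_cases i <;> simp [σ, τ] <;> ring

theorem SmoothNear.exists_even_odd {E : Type} [NormedAddCommGroup E] [InnerProductSpace ℝ E]
    [FiniteDimensional ℝ E] {c : E × ℝ → ℝ} {x : E} (hc : SmoothNear c (x, 0)) :
    ∃ p q : E × ℝ → ℝ, ContDiff ℝ ∞ p ∧ ContDiff ℝ ∞ q ∧
      ∀ᶠ y in 𝓝 (x, 0), c y = p (y.1, y.2 ^ 2) + y.2 * q (y.1, y.2 ^ 2) := by
  obtain ⟨g, hg, hgs, hgc⟩ := hc.exists_contDiff_hasCompactSupport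
  obtain ⟨p, q, hp, hq, h⟩ := exists_even_odd_of_hasCompactSupport hg hgs
  exact ⟨p, q, hp, hq, hgc.mono fun y hy => hy ▸ h y.1 y.2⟩

variable {a b c : ℝ × ℝ → ℝ} {t₀ : ℝ}

/-- In the splitting `c = p(x, s²) + s q(x, s²)`, the odd part contributes `s⁴ q(x, s²)` to the
last component, a function of the first two, and `p` can serve as the first coordinate. -/
theorem germEquiv_of_deriv_ne_zero (hc : SmoothNear c (t₀, 0)) (hc₀ : c (t₀, 0) = 0)
    (hc₁ : deriv (fun x => c (x, 0)) t₀ ≠ 0) :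
    GermEquiv (fun p : ℝ × ℝ => (p.1, p.2 ^ 2, p.2 ^ 3 * c p)) (t₀, 0)
      (fun p : ℝ × ℝ => (p.1, p.2 ^ 2, p.1 * p.2 ^ 3)) (0, 0) := by
  obtain ⟨p, q, hp, hq, h_split⟩ := hc.exists_even_odd
  have h_axis : (fun x => c (x, 0)) =ᶠ[𝓝 t₀] fun x => p (x, 0) := by
    filter_upwards [(Continuous.prodMk_left (0 : ℝ)).continuousAt.eventually h_split] with x hx
    simpa using hx
  have hp₀ : p (t₀, 0) = 0 := h_axis.self_of_nhds.symm.trans hc₀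
  have hp₁ : deriv (fun x => p (x, 0)) t₀ ≠ 0 := h_axis.deriv_eq ▸ hc₁
  let shear (z : ℝ × ℝ × ℝ) : ℝ × ℝ × ℝ := (z.1, z.2.1, z.2.2 - z.2.1 ^ 2 * q (z.1, z.2.1))
  have h_shear : IsGermDiffeo shear (t₀, 0, 0) :=
    .of_contDiff (ρ := fun z => (z.1, z.2.1, z.2.2 + z.2.1 ^ 2 * q (z.1, z.2.1))) (by fun_prop)
      (by fun_prop) (by simp [shear]) (by simp [shear]) _
  have h_straighten : IsGermDiffeo (fun z : ℝ × ℝ × ℝ => (p (z.1, z.2.1), z.2))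
      (shear (t₀, 0, 0)) := by
    simpa [shear] using IsGermDiffeo.prodMk_snd (E := ℝ × ℝ) (x := t₀) (w := (0, 0))
      (smoothNear_of_contDiff (f := fun z => p (z.1, z.2.1)) (by fun_prop) _) hp₁
  refine ⟨fun y => (p (y.1, y.2 ^ 2), y.2), _, IsGermDiffeo.prodMk_snd
    (smoothNear_of_contDiff (by fun_prop) _) (by simpa using hp₁),
    by simpa using h_straighten.comp h_shear, by simp [hp₀], ?_⟩
  filter_upwards [h_split] with y hy
  simp only [shear, Prod.mk.injEq, true_and, hy]
  ring

theorem eventually_one_add_snd_mul_pos (hb : ContinuousAt b (t₀, 0)) :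
    ∀ᶠ p in 𝓝 (t₀, 0), 0 < 1 + p.2 * b p := by
  have h_cont : ContinuousAt (fun p => 1 + p.2 * b p) (t₀, 0) := by fun_prop
  exact h_cont.eventually (lt_mem_nhds (by simp))

theorem smoothNear_sqrt_one_add_snd_mul (hb : SmoothNear b (t₀, 0)) :
    SmoothNear (fun p => √(1 + p.2 * b p)) (t₀, 0) := by
  filter_upwards [hb, eventually_one_add_snd_mul_pos hb.continuousAt] with p hbp hp
  exact ContDiffAt.sqrt (by fun_prop) hp.ne'

theorem isGermDiffeo_cuspidal_coordinates (ha : SmoothNear a (t₀, 0)) (hb : SmoothNear b (t₀, 0)) :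
    IsGermDiffeo (fun p : ℝ × ℝ => (p.1 + p.2 ^ 3 * a p, p.2 * √(1 + p.2 * b p))) (t₀, 0) := by
  have h_sqrt := smoothNear_sqrt_one_add_snd_mul hb
  have h_fst := (hasFDerivAt_fst (𝕜 := ℝ) (p := (t₀, (0 : ℝ)))).add
    (((hasFDerivAt_snd (𝕜 := ℝ) (p := (t₀, (0 : ℝ)))).pow 3).mul ha.differentiableAt.hasFDerivAt)
  have h_snd := (hasFDerivAt_snd (𝕜 := ℝ) (p := (t₀, (0 : ℝ)))).mul
    h_sqrt.differentiableAt.hasFDerivAt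
  refine .of_injective rfl ?_ (h_fst.prodMk h_snd) fun v hv => by simpa using hv
  filter_upwards [ha, h_sqrt] with p hp hp'
  fun_prop

theorem germEquiv_of_cuspidal_expansion (ha : SmoothNear a (t₀, 0)) (hb : SmoothNear b (t₀, 0))
    (hc : SmoothNear c (t₀, 0)) (hc₀ : c (t₀, 0) = 0) (hc₁ : deriv (fun x => c (x, 0)) t₀ ≠ 0) :
    GermEquiv
      (fun p : ℝ × ℝ => (p.1 + p.2 ^ 3 * a p, p.2 ^ 2 + p.2 ^ 3 * b p, p.2 ^ 3 * c p)) (t₀, 0)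
      (fun p : ℝ × ℝ => (p.1, p.2 ^ 2, p.1 * p.2 ^ 3)) (0, 0) := by
  let k (p : ℝ × ℝ) : ℝ := √(1 + p.2 * b p)
  let σ (p : ℝ × ℝ) : ℝ × ℝ := (p.1 + p.2 ^ 3 * a p, p.2 * k p)
  have hσ : IsGermDiffeo σ (t₀, 0) := isGermDiffeo_cuspidal_coordinates ha hb
  have hσ_axis (x : ℝ) : σ (x, 0) = (x, 0) := by simp [σ]
  have h_pos := eventually_one_add_snd_mul_pos hb.continuousAt
  have hck : SmoothNear (fun p => c p / k p ^ 3) (t₀, 0) := by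
    filter_upwards [hc, smoothNear_sqrt_one_add_snd_mul hb, h_pos] with p hcp hkp hp
    exact hcp.div (hkp.pow 3) (by positivity)
  obtain ⟨ρ, hρ, hρσ, -⟩ := hσ.2
  rw [hσ_axis] at hρ
  have h_axis : (fun x => c (ρ (x, 0)) / k (ρ (x, 0)) ^ 3) =ᶠ[𝓝 t₀] fun x => c (x, 0) := by
    filter_upwards [(Continuous.prodMk_left (0 : ℝ)).continuousAt.eventually hρσ] with x hx
    rw [hσ_axis] at hx
    simp [hx, k]
  have hρ₀ : ρ (t₀, 0) = (t₀, 0) := by simpa [hσ_axis] using hρσ.self_of_nhds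
  refine GermEquiv.trans ⟨σ, fun y => y, hσ, .refl _, hσ_axis t₀, ?_⟩ (germEquiv_of_deriv_ne_zero
    (hck.comp_of_eq hρ hρ₀) (h_axis.self_of_nhds.trans hc₀) (by rwa [h_axis.deriv_eq]))
  filter_upwards [hρσ, h_pos] with p hp h_pos_p
  have hk : k p ^ 2 = 1 + p.2 * b p := Real.sq_sqrt h_pos_p.le
  have hk' : k p ≠ 0 := (Real.sqrt_pos.2 h_pos_p).ne'
  rw [hp]
  simp only [σ, Prod.mk.injEq, true_and, mul_pow, hk]
  constructor
  · ring
  · field_simp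

end NormalForms

section Lift

universe u

variable {E H : Type u} {F : Type*} [NormedAddCommGroup E] [NormedSpace ℝ E]
  [NormedAddCommGroup F] [NormedSpace ℝ F] [NormedAddCommGroup H] [NormedSpace ℝ H]

theorem fderiv_apply_of_lift_add_smul {Ψ : H → F} {x : H} {w : F} {N : ℝ → H}
    (hΨ : DifferentiableAt ℝ Ψ x) (hN : DifferentiableAt ℝ N 0)
    (h : ∀ᶠ r in 𝓝 (0 : ℝ), Ψ (x + r • N r) = Ψ x + r • w) : fderiv ℝ Ψ x (N 0) = w := by
  have h_line : HasDerivAt (fun r : ℝ => x + r • N r) (N 0) 0 := by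
    simpa using ((hasDerivAt_id (0 : ℝ)).smul hN.hasDerivAt).const_add x
  have h_left := HasFDerivAt.comp_hasDerivAt (l := Ψ) (0 : ℝ) (by simpa using hΨ.hasFDerivAt) h_line
  have h_right : HasDerivAt (fun r : ℝ => Ψ x + r • w) w 0 := by
    simpa using ((hasDerivAt_id (0 : ℝ)).smul_const w).const_add (Ψ x)
  exact h_left.unique (h_right.congr_of_eventuallyEq h)

theorem IsGermDiffeo.germEquiv_of_comp {Ψ : H → F} {f : E → F} {g : E → H} {p : E}
    (hΨ : IsGermDiffeo Ψ (g p)) (hg : ContinuousAt g p) (h : ∀ᶠ x in 𝓝 p, f x = Ψ (g x)) :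
    GermEquiv f p g p := by
  obtain ⟨hΨs, ρ, hρ, hρΨ, hΨρ⟩ := hΨ
  have h_base : ρ (Ψ (g p)) = g p := hρΨ.self_of_nhds
  refine ⟨fun x => x, ρ, .refl p, ?_, rfl, ?_⟩
  · rw [h.self_of_nhds]
    exact ⟨hρ, Ψ, by rwa [h_base], hΨρ, by rwa [h_base]⟩
  · filter_upwards [h, hg.eventually hρΨ] with x hx hx'
    rw [hx, hx']

theorem IsGermDiffeo.exists_lift_add_smul [FiniteDimensional ℝ E] [CompleteSpace H]
    {Ψ : H → F} {G : E → H} {W : E → F} {p : E} (hΨ : IsGermDiffeo Ψ (G p))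
    (hG : SmoothNear G p) (hW : SmoothNear W p) :
    ∃ N : E × ℝ → H, SmoothNear N (p, 0) ∧
      (∀ᶠ q in 𝓝 (p, (0 : ℝ)), Ψ (G q.1 + q.2 • N q) = Ψ (G q.1) + q.2 • W q.1) ∧
      ∀ᶠ x in 𝓝 p, fderiv ℝ Ψ (G x) (N (x, 0)) = W x := by
  obtain ⟨hΨs, ρ, hρ, hρΨ, hΨρ⟩ := hΨ
  have hG' : SmoothNear (fun q : E × ℝ => G q.1) (p, 0) :=
    hG.comp_of_eq (smoothNear_of_contDiff contDiff_fst _) rfl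
  have hW' : SmoothNear (fun q : E × ℝ => W q.1) (p, 0) :=
    hW.comp_of_eq (smoothNear_of_contDiff contDiff_fst _) rfl
  have h_disp : SmoothNear (fun q : E × ℝ => Ψ (G q.1) + q.2 • W q.1) (p, 0) := by
    filter_upwards [hΨs.comp_of_eq hG' rfl, hW'] with q hq hq'
    exact hq.add (contDiffAt_snd.smul hq')
  have h_base : Ψ (G p) + (0 : ℝ) • W p = Ψ (G p) := by simp
  obtain ⟨N, hN, h_eq⟩ := (hρ.comp_of_eq h_disp h_base).exists_eq_add_smul
  have h_tendsto := h_disp.continuousAt.tendsto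
  rw [h_base] at h_tendsto
  have h_lift : ∀ᶠ q in 𝓝 (p, (0 : ℝ)), Ψ (G q.1 + q.2 • N q) = Ψ (G q.1) + q.2 • W q.1 := by
    filter_upwards [h_eq, hG'.continuousAt.eventually hρΨ, h_tendsto.eventually hΨρ]
      with q hq h_left h_right
    rw [zero_smul, add_zero, h_left] at hq
    rw [← hq, h_right]
  refine ⟨N, hN, h_lift, ?_⟩
  have h_slice : Tendsto (fun x : E => (x, (0 : ℝ))) (𝓝 p) (𝓝 (p, 0)) :=
    Continuous.tendsto (by fun_prop) p
  filter_upwards [hG.continuousAt.eventually hΨs, h_slice.eventually hN,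
    h_slice.eventually h_lift.eventually_nhds] with x hΨx hNx hx
  have h_line : Tendsto (fun r : ℝ => (x, r)) (𝓝 0) (𝓝 (x, 0)) :=
    Continuous.tendsto (by fun_prop) 0
  exact fderiv_apply_of_lift_add_smul (N := fun r => N (x, r)) (hΨx.differentiableAt (by simp))
    ((hNx.differentiableAt (by simp)).comp 0 (by fun_prop)) (h_line.eventually hx)

end Lift

section Expansion

theorem linearIndependent_triple_iff {V : Type*} [AddCommGroup V] [Module ℝ V] {u v e : V} :
    LinearIndependent ℝ ![u, v, e] ↔
      LinearIndependent ℝ ![u, v] ∧ e ∉ Submodule.span ℝ {u, v} := by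
  have h_snoc : (![u, v, e] : Fin 3 → V) = Fin.snoc (α := fun _ => V) ![u, v] e := by
    ext i
    fin_cases i <;> rfl
  rw [h_snoc, linearIndependent_finSnoc, Matrix.range_cons_cons_empty]

theorem exists_dual_of_linearIndependent {V : Type*} [AddCommGroup V] [Module ℝ V] {u v e : V}
    (h : LinearIndependent ℝ ![u, v, e]) : ∃ ℓ : V →ₗ[ℝ] ℝ, ℓ u = 0 ∧ ℓ v = 0 ∧ ℓ e = 1 := by
  obtain ⟨ℓ, hℓe, hℓ⟩ := Submodule.exists_le_ker_of_notMem
    (linearIndependent_triple_iff.1 h).2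
  have hu : ℓ u = 0 := hℓ (Submodule.subset_span (by simp))
  have hv : ℓ v = 0 := hℓ (Submodule.subset_span (by simp))
  exact ⟨(ℓ e)⁻¹ • ℓ, by simp [hu], by simp [hv], by simp [hℓe]⟩

variable {V : Type*} [NormedAddCommGroup V] [NormedSpace ℝ V]

/-- `L` plays the role of the connection matrix along a curve, so that `T₀`, `T₁`, `T₂`, `e` are
successive covariant derivatives. -/
theorem coeff_eq_zero_and_deriv_coeff_eq_one {T₀ T₁ T₂ : ℝ → V} {e : V} {a b c : ℝ → ℝ} {t : ℝ}
    (L : V →ₗ[ℝ] V) (hT₀ : HasDerivAt T₀ (T₁ t - L (T₀ t)) t)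
    (hT₁ : HasDerivAt T₁ (T₂ t - L (T₁ t)) t) (hT₂ : HasDerivAt T₂ (e - L (T₂ t)) t)
    (ha : DifferentiableAt ℝ a t) (hb : DifferentiableAt ℝ b t) (hc : DifferentiableAt ℝ c t)
    (h_ind : LinearIndependent ℝ ![T₀ t, T₁ t, e]) (h_dep : T₂ t ∈ Submodule.span ℝ {T₀ t, T₁ t})
    (h_eq : ∀ᶠ x in 𝓝 t, T₂ x = a x • T₀ x + b x • T₁ x + c x • e) :
    c t = 0 ∧ deriv c t = 1 := by
  obtain ⟨ℓ, hℓ₀, hℓ₁, hℓe⟩ := exists_dual_of_linearIndependent h_ind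
  have hℓ₂ : ℓ (T₂ t) = 0 := by
    obtain ⟨α, β, h⟩ := Submodule.mem_span_pair.1 h_dep
    simp [← h, hℓ₀, hℓ₁]
  have h_eq_t := h_eq.self_of_nhds
  have hc_t : c t = 0 := by simpa [hℓ₀, hℓ₁, hℓ₂, hℓe] using (congrArg ℓ h_eq_t).symm
  have h_leibniz := (((ha.hasDerivAt.smul hT₀).add (hb.hasDerivAt.smul hT₁)).add
    (hc.hasDerivAt.smul_const e)).congr_of_eventuallyEq h_eq
  have h_deriv := congrArg ℓ (hT₂.unique h_leibniz)
  have hL := congrArg (fun v => ℓ (L v)) h_eq_t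
  simp only [map_add, map_sub, map_smul, smul_eq_mul, hℓ₀, hℓ₁, hℓ₂, hℓe, hc_t] at h_deriv hL
  exact ⟨hc_t, by linarith⟩

/-- The coordinates `(x, y, z) ↦ γ(x) + y A(x) + z e` near a curve `γ`, adapted to a vector field
`A` along `γ` and a constant vector `e`. -/
def curveChart (γ A : ℝ → V) (e : V) (z : ℝ × ℝ × ℝ) : V := γ z.1 + z.2.1 • A z.1 + z.2.2 • e

theorem hasFDerivAt_curveChart {γ A : ℝ → V} {x : ℝ} (hγ : DifferentiableAt ℝ γ x)
    (hA : DifferentiableAt ℝ A x) (e : V) :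
    ∃ L : ℝ × ℝ × ℝ →L[ℝ] V, HasFDerivAt (curveChart γ A e) L (x, 0, 0) ∧
      ∀ v, L v = v.1 • deriv γ x + v.2.1 • A x + v.2.2 • e := by
  let P₂ := (ContinuousLinearMap.fst ℝ ℝ ℝ).comp (.snd ℝ ℝ (ℝ × ℝ))
  let P₃ := (ContinuousLinearMap.snd ℝ ℝ ℝ).comp (.snd ℝ ℝ (ℝ × ℝ))
  have h_along {B : ℝ → V} (hB : DifferentiableAt ℝ B x) :
      HasFDerivAt (fun z : ℝ × ℝ × ℝ => B z.1) _ (x, 0, 0) :=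
    hB.hasDerivAt.hasFDerivAt.comp (x, (0 : ℝ), (0 : ℝ)) hasFDerivAt_fst
  refine ⟨_, ((h_along hγ).add (P₂.hasFDerivAt.smul (h_along hA))).add
    (P₃.hasFDerivAt.smul_const e), fun v => ?_⟩
  simp [P₂, P₃]

theorem smoothNear_curveChart {γ A : ℝ → V} {x : ℝ} (hγ : SmoothNear γ x) (hA : SmoothNear A x)
    (e : V) : SmoothNear (curveChart γ A e) (x, 0, 0) := by
  have h_fst (z : ℝ × ℝ × ℝ) := smoothNear_of_contDiff (contDiff_fst (𝕜 := ℝ)) z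
  filter_upwards [hγ.comp_of_eq (h_fst (x, 0, 0)) rfl, hA.comp_of_eq (h_fst (x, 0, 0)) rfl]
    with z hγz hAz
  exact (hγz.add (contDiffAt_snd.fst.smul hAz)).add (contDiffAt_snd.snd.smul contDiffAt_const)

theorem isGermDiffeo_curveChart [FiniteDimensional ℝ V] (h_dim : Module.finrank ℝ V = 3)
    {γ A : ℝ → V} {e : V} {x : ℝ} (hγ : SmoothNear γ x) (hA : SmoothNear A x)
    (h_ind : LinearIndependent ℝ ![deriv γ x, A x, e]) :
    IsGermDiffeo (curveChart γ A e) (x, 0, 0) := by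
  obtain ⟨L, hL, hL_apply⟩ := hasFDerivAt_curveChart hγ.differentiableAt hA.differentiableAt e
  refine .of_injective (by simp [h_dim]) (smoothNear_curveChart hγ hA e) hL fun v hv => ?_
  rw [hL_apply] at hv
  have h_coeff := Fintype.linearIndependent_iff.1 h_ind ![v.1, v.2.1, v.2.2]
    (by simpa [Fin.sum_univ_three] using hv)
  exact Prod.ext (h_coeff 0) (Prod.ext (h_coeff 1) (h_coeff 2))

variable [FiniteDimensional ℝ V] {γ T₁ T₂ : ℝ → V} {F R : ℝ × ℝ → V} {t₀ : ℝ}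

theorem exists_curveChart_coordinates (h_dim : Module.finrank ℝ V = 3) {e : V}
    (hγ : SmoothNear γ t₀) (hT₁ : SmoothNear T₁ t₀) (hT₂ : SmoothNear T₂ t₀)
    (hR : SmoothNear R (t₀, 0)) (h_ind : LinearIndependent ℝ ![deriv γ t₀, T₁ t₀, e])
    (hF : ∀ᶠ p in 𝓝 (t₀, (0 : ℝ)), F p =
      γ p.1 - (p.2 ^ 2 / 2) • T₁ p.1 + (p.2 ^ 3 / 3) • T₂ p.1 + p.2 ^ 4 • R p) :
    ∃ Ψ : ℝ × ℝ × ℝ → V, IsGermDiffeo Ψ (t₀, 0, 0) ∧ ∃ N : ℝ × ℝ → ℝ × ℝ × ℝ,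
      SmoothNear N (t₀, 0) ∧
      (∀ᶠ p in 𝓝 (t₀, (0 : ℝ)), F p = Ψ ((p.1, p.2 ^ 2, 0) + p.2 ^ 3 • N p)) ∧
      ∀ᶠ x in 𝓝 t₀, T₂ x = (3 * (N (x, 0)).1) • deriv γ x +
        (-3 / 2 * (N (x, 0)).2.1) • T₁ x + (3 * (N (x, 0)).2.2) • e := by
  let A : ℝ → V := fun x => (-1 / 2 : ℝ) • T₁ x
  have hA : SmoothNear A t₀ := by
    filter_upwards [hT₁] with x hx using hx.const_smul _
  have hΨ : IsGermDiffeo (curveChart γ A e) (t₀, 0, 0) := by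
    refine isGermDiffeo_curveChart h_dim hγ hA ?_
    convert h_ind.units_smul ![1, Units.mk0 (-1 / 2) (by norm_num), 1] using 1
    ext1 i
    fin_cases i <;> simp [A, Units.smul_def]
  let G : ℝ × ℝ → ℝ × ℝ × ℝ := fun p => (p.1, p.2 ^ 2, 0)
  let D : ℝ × ℝ → V := fun p => (1 / 3 : ℝ) • T₂ p.1 + p.2 • R p
  have hG₀ : G (t₀, 0) = (t₀, 0, 0) := by simp [G]
  have hD : SmoothNear D (t₀, 0) := by
    filter_upwards [hT₂.comp_of_eq (smoothNear_of_contDiff contDiff_fst (t₀, (0 : ℝ))) rfl, hR]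
      with p hp hp' using (hp.const_smul _).add (contDiffAt_snd.smul hp')
  obtain ⟨N, hN, h_lift, h_fderiv⟩ := (hG₀ ▸ hΨ).exists_lift_add_smul
    (smoothNear_of_contDiff (by fun_prop) _) hD
  have h_cube : ContDiff ℝ ∞ fun p : ℝ × ℝ => (p, p.2 ^ 3) := by fun_prop
  have h_slice : Tendsto (fun x : ℝ => (x, (0 : ℝ))) (𝓝 t₀) (𝓝 (t₀, 0)) :=
    Continuous.tendsto (by fun_prop) t₀
  refine ⟨_, hΨ, fun p => N (p, p.2 ^ 3),
    hN.comp_of_eq (smoothNear_of_contDiff h_cube _) (by simp), ?_, ?_⟩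
  · have h_tendsto : Tendsto (fun p : ℝ × ℝ => (p, p.2 ^ 3)) (𝓝 (t₀, 0)) (𝓝 ((t₀, 0), 0)) := by
      simpa using h_cube.continuous.tendsto (t₀, (0 : ℝ))
    filter_upwards [hF, h_tendsto.eventually h_lift] with p hFp hp
    rw [show ((p.1, p.2 ^ 2, 0) : ℝ × ℝ × ℝ) = G p from rfl, hp, hFp]
    simp only [G, D, A, curveChart]
    module
  · filter_upwards [hγ, hA, h_slice.eventually h_fderiv] with x hγx hAx hx
    obtain ⟨L, hL, hL_apply⟩ := hasFDerivAt_curveChart (hγx.differentiableAt (by simp))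
      (hAx.differentiableAt (by simp)) e
    simp only [G, ne_eq, OfNat.ofNat_ne_zero, not_false_eq_true, zero_pow, hL.fderiv, hL_apply, D,
      zero_smul, add_zero] at hx
    calc T₂ x = (3 : ℝ) • ((1 / 3 : ℝ) • T₂ x) := by module
      _ = _ := by
        rw [← hx, zero_pow three_ne_zero]
        module

theorem germEquiv_of_expansion (h_dim : Module.finrank ℝ V = 3) {e : V} (hγ : SmoothNear γ t₀)
    (hT₁ : SmoothNear T₁ t₀) (hT₂ : SmoothNear T₂ t₀) (hR : SmoothNear R (t₀, 0))
    (hF : ∀ᶠ p in 𝓝 (t₀, (0 : ℝ)), F p =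
      γ p.1 - (p.2 ^ 2 / 2) • T₁ p.1 + (p.2 ^ 3 / 3) • T₂ p.1 + p.2 ^ 4 • R p)
    (L : V →ₗ[ℝ] V) (hγ' : deriv (deriv γ) t₀ = T₁ t₀ - L (deriv γ t₀))
    (hT₁' : deriv T₁ t₀ = T₂ t₀ - L (T₁ t₀)) (hT₂' : deriv T₂ t₀ = e - L (T₂ t₀))
    (h_ind : LinearIndependent ℝ ![deriv γ t₀, T₁ t₀, e])
    (h_dep : T₂ t₀ ∈ Submodule.span ℝ {deriv γ t₀, T₁ t₀}) :
    GermEquiv F (t₀, 0) (fun p : ℝ × ℝ => (p.1, p.2 ^ 2, p.1 * p.2 ^ 3)) (0, 0) := by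
  obtain ⟨Ψ, hΨ, N, hN, hF_chart, hT₂_eq⟩ :=
    exists_curveChart_coordinates h_dim hγ hT₁ hT₂ hR h_ind hF
  have ha : SmoothNear (fun p => (N p).1) (t₀, 0) := by filter_upwards [hN] with p hp using hp.fst
  have hb : SmoothNear (fun p => (N p).2.1) (t₀, 0) := by
    filter_upwards [hN] with p hp using hp.snd.fst
  have hc : SmoothNear (fun p => (N p).2.2) (t₀, 0) := by
    filter_upwards [hN] with p hp using hp.snd.snd
  have h_slice {h : ℝ × ℝ → ℝ} (hh : SmoothNear h (t₀, 0)) :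
      DifferentiableAt ℝ (fun x => h (x, 0)) t₀ :=
    hh.differentiableAt.comp t₀ (f := fun x => (x, 0)) (by fun_prop)
  obtain ⟨hc₀, hc₁⟩ := coeff_eq_zero_and_deriv_coeff_eq_one L
    (hγ' ▸ hγ.deriv.differentiableAt.hasDerivAt) (hT₁' ▸ hT₁.differentiableAt.hasDerivAt)
    (hT₂' ▸ hT₂.differentiableAt.hasDerivAt) ((h_slice ha).const_mul 3)
    ((h_slice hb).const_mul (-3 / 2)) ((h_slice hc).const_mul 3) h_ind h_dep hT₂_eq
  have h_normal := germEquiv_of_cuspidal_expansion ha hb hc (by simpa using hc₀) fun h => by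
    rw [deriv_const_mul 3 (h_slice hc), h] at hc₁
    norm_num at hc₁
  have hΨ_base : ((t₀, (0 : ℝ) ^ 2, 0) : ℝ × ℝ × ℝ) + (0 : ℝ) ^ 3 • N (t₀, 0) = (t₀, 0, 0) := by
    simp
  have h_inner : ContinuousAt
      (fun p : ℝ × ℝ => ((p.1, p.2 ^ 2, 0) : ℝ × ℝ × ℝ) + p.2 ^ 3 • N p) (t₀, 0) := by
    have := hN.continuousAt
    fun_prop
  refine (IsGermDiffeo.germEquiv_of_comp (by rwa [hΨ_base]) h_inner hF_chart).trans ?_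
  convert h_normal using 2
  exact Prod.ext rfl (Prod.ext rfl (zero_add _))

end Expansion

section DirDeriv

variable {E F : Type*} [NormedAddCommGroup E] [NormedSpace ℝ E]
  [NormedAddCommGroup F] [NormedSpace ℝ F]

/-- The derivative of `f` along the constant vector field `v`, with the arguments ordered so that
`dirDeriv v` can be iterated. -/
def dirDeriv (v : E) (f : E → F) (p : E) : F := fderiv ℝ f p v

theorem SmoothNear.dirDeriv {f : E → F} {p : E} (hf : SmoothNear f p) (v : E) :
    SmoothNear (dirDeriv v f) p := by
  filter_upwards [hf.fderiv] with q hq using hq.clm_apply contDiffAt_const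

theorem dirDeriv_congr {f g : E → F} {p : E} (h : f =ᶠ[𝓝 p] g) (v : E) :
    dirDeriv v f p = dirDeriv v g p := by
  rw [dirDeriv, h.fderiv_eq, dirDeriv]

theorem dirDeriv_fun_neg (f : E → F) (p v : E) :
    dirDeriv v (fun q => -f q) p = -dirDeriv v f p := by
  simp [dirDeriv, fderiv_fun_neg]

theorem hasDerivAt_comp_add_smul {f : E → F} {p v : E} {s : ℝ}
    (hf : DifferentiableAt ℝ f (p + s • v)) :
    HasDerivAt (fun r => f (p + r • v)) (dirDeriv v f (p + s • v)) s :=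
  HasFDerivAt.comp_hasDerivAt (l := f) s hf.hasFDerivAt
    (by simpa using ((hasDerivAt_id s).smul_const v).const_add p)

theorem dirDeriv_comm {f : E → F} {p : E} (hf : SmoothNear f p) (v w : E) :
    dirDeriv v (dirDeriv w f) p = dirDeriv w (dirDeriv v f) p := by
  have h_snd (u u' : E) :
      dirDeriv u (dirDeriv u' f) p = fderiv ℝ (fderiv ℝ f) p u u' := by
    have h := hf.fderiv.differentiableAt.hasFDerivAt.clm_apply (hasFDerivAt_const u' p)
    change fderiv ℝ (fun q => fderiv ℝ f q u') p u = _
    simp [h.fderiv]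
  rw [h_snd, h_snd]
  have h_order : minSmoothness ℝ 2 ≤ ∞ := by
    rw [minSmoothness_of_isRCLikeNormedField]
    exact WithTop.coe_le_coe.2 le_top
  exact hf.contDiffAt.isSymmSndFDerivAt h_order v w

theorem iteratedDeriv_comp_add_smul {f : E → F} {p : E} (hf : SmoothNear f p) (v : E)
    (k : ℕ) : iteratedDeriv k (fun s : ℝ => f (p + s • v)) 0 = (dirDeriv v)^[k] f p := by
  induction k generalizing f with
  | zero => simp
  | succ k ih =>
    have h_tendsto : Tendsto (fun s : ℝ => p + s • v) (𝓝 0) (𝓝 p) := by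
      simpa using Continuous.tendsto (f := fun s : ℝ => p + s • v) (by fun_prop) 0
    have h_deriv : deriv (fun s : ℝ => f (p + s • v)) =ᶠ[𝓝 0]
        fun s => dirDeriv v f (p + s • v) := by
      filter_upwards [h_tendsto.eventually hf] with s hs
      exact (hasDerivAt_comp_add_smul (hs.differentiableAt (by simp))).deriv
    rw [iteratedDeriv_succ', h_deriv.iteratedDeriv_eq, ih (hf.dirDeriv v),
      Function.iterate_succ_apply]

theorem dirDeriv_neg_one_one (g : ℝ × ℝ → F) (p : ℝ × ℝ) :
    dirDeriv (-1, 1) g p = dirDeriv (0, 1) g p - dirDeriv (1, 0) g p := by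
  simp only [dirDeriv, ← map_sub]
  norm_num

theorem dirDeriv_one_zero_of_eventuallyEq {g : ℝ × ℝ → F} {h : ℝ → F} {t : ℝ}
    (hg : DifferentiableAt ℝ g (t, 0)) (h_eq : ∀ᶠ u in 𝓝 t, g (u, 0) = h u) :
    dirDeriv (1, 0) g (t, 0) = deriv h t := by
  have h_line := hg.hasFDerivAt.comp_hasDerivAt t
    ((hasDerivAt_id t).prodMk (hasDerivAt_const t (0 : ℝ)))
  exact (h_line.congr_of_eventuallyEq (h_eq.mono fun _ hu => hu.symm)).deriv.symm

theorem deriv_snd_slice {g : ℝ × ℝ → F} {p : ℝ × ℝ} (hg : DifferentiableAt ℝ g p) :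
    deriv (fun s => g (p.1, s)) p.2 = dirDeriv (0, 1) g p :=
  (HasFDerivAt.comp_hasDerivAt (l := g) p.2 hg.hasFDerivAt
    ((hasDerivAt_const p.2 p.1).prodMk (hasDerivAt_id p.2))).deriv

theorem deriv_deriv_snd_slice {g : ℝ × ℝ → F} {p : ℝ × ℝ} (hg : SmoothNear g p) :
    deriv (deriv fun s => g (p.1, s)) p.2 = dirDeriv (0, 1) (dirDeriv (0, 1) g) p := by
  have h_line : Tendsto (fun s : ℝ => (p.1, s)) (𝓝 p.2) (𝓝 p) :=
    Continuous.tendsto (by fun_prop) p.2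
  have h_deriv : deriv (fun s => g (p.1, s)) =ᶠ[𝓝 p.2] fun s => dirDeriv (0, 1) g (p.1, s) :=
    (h_line.eventually hg.eventually).mono fun s hs => deriv_snd_slice hs.differentiableAt
  rw [h_deriv.deriv_eq, deriv_snd_slice (hg.dirDeriv _).differentiableAt]

end DirDeriv

section TangentSurface

variable {V : Type*} [NormedAddCommGroup V] [NormedSpace ℝ V]

/-- The covariant derivative of the vector field `X` along the curve `γ`, for the connection with
Christoffel form `B`. -/
def covariantDeriv (B : V → V →L[ℝ] V →L[ℝ] V) (γ X : ℝ → V) (t : ℝ) : V :=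
  deriv X t + B (γ t) (deriv γ t) (X t)

/-- Near `(t₀, 0)`, the curves `f (t, ·)` are the geodesics with initial velocity `γ' t`, for the
connection with Christoffel form `B`. -/
structure IsTangentSurfaceNear (B : V → V →L[ℝ] V →L[ℝ] V) (γ : ℝ → V) (f : ℝ × ℝ → V)
    (t₀ : ℝ) : Prop where
  smooth : SmoothNear f (t₀, 0)
  base : ∀ᶠ t in 𝓝 t₀, f (t, 0) = γ t
  velocity : ∀ᶠ t in 𝓝 t₀, dirDeriv (0, 1) f (t, 0) = deriv γ t
  geodesic : ∀ᶠ p in 𝓝 (t₀, (0 : ℝ)), dirDeriv (0, 1) (dirDeriv (0, 1) f) p =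
    -B (f p) (dirDeriv (0, 1) f p) (dirDeriv (0, 1) f p)

variable {B : V → V →L[ℝ] V →L[ℝ] V} {γ : ℝ → V} {f : ℝ × ℝ → V} {t₀ : ℝ}

theorem SmoothNear.covariantDeriv {X : ℝ → V} (hB : SmoothNear B (γ t₀)) (hγ : SmoothNear γ t₀)
    (hX : SmoothNear X t₀) : SmoothNear (covariantDeriv B γ X) t₀ := by
  filter_upwards [hB.comp hγ, hγ.deriv, hX, hX.deriv] with t h₁ h₂ h₃ h₄
  exact h₄.add ((h₁.clm_apply h₂).clm_apply h₃)

theorem SmoothNear.iterate_covariantDeriv {X : ℝ → V} (hB : SmoothNear B (γ t₀))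
    (hγ : SmoothNear γ t₀) (hX : SmoothNear X t₀) (k : ℕ) :
    SmoothNear ((_root_.covariantDeriv B γ)^[k] X) t₀ := by
  induction k with
  | zero => exact hX
  | succ k ih =>
    rw [Function.iterate_succ_apply']
    exact hB.covariantDeriv hγ ih

theorem dirDeriv_apply_self {E : Type*} [NormedAddCommGroup E] [NormedSpace ℝ E] {g h : E → V}
    {p v : E} (h_symm : ∀ x u w, B x u w = B x w u) (hB : DifferentiableAt ℝ B (g p))
    (hg : DifferentiableAt ℝ g p) (hh : DifferentiableAt ℝ h p) (h_zero : dirDeriv v g p = 0) :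
    dirDeriv v (fun q => B (g q) (h q) (h q)) p = (2 : ℝ) • B (g p) (h p) (dirDeriv v h p) := by
  have h_form : HasFDerivAt (fun q => B (g q)) _ p :=
    .comp (g := B) p hB.hasFDerivAt hg.hasFDerivAt
  have h_prod := (h_form.clm_apply hh.hasFDerivAt).clm_apply hh.hasFDerivAt
  rw [dirDeriv] at h_zero
  rw [dirDeriv, h_prod.fderiv]
  simp [dirDeriv, h_zero, h_symm _ (fderiv ℝ h p v), two_smul]

namespace IsTangentSurfaceNear

theorem eventually (hf : IsTangentSurfaceNear B γ f t₀) :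
    ∀ᶠ t in 𝓝 t₀, IsTangentSurfaceNear B γ f t := by
  have h_axis : Tendsto (fun t : ℝ => (t, (0 : ℝ))) (𝓝 t₀) (𝓝 (t₀, 0)) :=
    Continuous.tendsto (by fun_prop) t₀
  filter_upwards [h_axis.eventually hf.smooth.eventually, hf.base.eventually_nhds,
    hf.velocity.eventually_nhds, h_axis.eventually hf.geodesic.eventually_nhds]
    with t h₁ h₂ h₃ h₄ using ⟨h₁, h₂, h₃, h₄⟩

theorem dirDeriv_transverse (hf : IsTangentSurfaceNear B γ f t₀) :
    dirDeriv (-1, 1) f (t₀, 0) = 0 := by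
  rw [dirDeriv_neg_one_one, hf.velocity.self_of_nhds,
    dirDeriv_one_zero_of_eventuallyEq hf.smooth.differentiableAt hf.base, sub_self]

theorem dirDeriv_transverse_velocity (hf : IsTangentSurfaceNear B γ f t₀) :
    dirDeriv (-1, 1) (dirDeriv (0, 1) f) (t₀, 0) = -covariantDeriv B γ (deriv γ) t₀ := by
  rw [dirDeriv_neg_one_one, hf.geodesic.self_of_nhds, hf.base.self_of_nhds,
    hf.velocity.self_of_nhds, dirDeriv_one_zero_of_eventuallyEq
      (hf.smooth.dirDeriv _).differentiableAt hf.velocity, covariantDeriv]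
  abel

theorem iterate_two_dirDeriv_transverse (hf : IsTangentSurfaceNear B γ f t₀) :
    (dirDeriv (-1, 1))^[2] f (t₀, 0) = -covariantDeriv B γ (deriv γ) t₀ := by
  have h_zero : ∀ᶠ t in 𝓝 t₀, dirDeriv (-1, 1) f (t, 0) = 0 :=
    hf.eventually.mono fun _ ht => ht.dirDeriv_transverse
  change dirDeriv (-1, 1) (dirDeriv (-1, 1) f) (t₀, 0) = _
  rw [dirDeriv_neg_one_one, dirDeriv_comm hf.smooth, hf.dirDeriv_transverse_velocity,
    dirDeriv_one_zero_of_eventuallyEq (hf.smooth.dirDeriv _).differentiableAt h_zero,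
    deriv_const, sub_zero]

theorem iterate_three_dirDeriv_transverse (hf : IsTangentSurfaceNear B γ f t₀)
    (hB : DifferentiableAt ℝ B (γ t₀)) (h_symm : ∀ x u w, B x u w = B x w u) :
    (dirDeriv (-1, 1))^[3] f (t₀, 0) =
      (2 : ℝ) • covariantDeriv B γ (covariantDeriv B γ (deriv γ)) t₀ := by
  let T := covariantDeriv B γ (deriv γ)
  let f_s := dirDeriv (0, 1) f
  have hfs : SmoothNear f_s (t₀, 0) := hf.smooth.dirDeriv _
  have h_axis : dirDeriv (1, 0) (dirDeriv (-1, 1) (dirDeriv (-1, 1) f)) (t₀, 0) = -deriv T t₀ := by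
    rw [dirDeriv_one_zero_of_eventuallyEq ((hf.smooth.dirDeriv _).dirDeriv _).differentiableAt
      (hf.eventually.mono fun _ ht => ht.iterate_two_dirDeriv_transverse), deriv.fun_neg]
  have h_axis_velocity : dirDeriv (1, 0) (dirDeriv (-1, 1) f_s) (t₀, 0) = -deriv T t₀ := by
    rw [dirDeriv_one_zero_of_eventuallyEq (hfs.dirDeriv _).differentiableAt
      (hf.eventually.mono fun _ ht => ht.dirDeriv_transverse_velocity), deriv.fun_neg]
  have h_geodesic : dirDeriv (-1, 1) (dirDeriv (0, 1) f_s) (t₀, 0) =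
      (2 : ℝ) • B (γ t₀) (deriv γ t₀) (T t₀) := by
    have h_self := dirDeriv_apply_self h_symm (hf.base.self_of_nhds.symm ▸ hB)
      hf.smooth.differentiableAt hfs.differentiableAt hf.dirDeriv_transverse
    rw [dirDeriv_congr hf.geodesic, dirDeriv_fun_neg, h_self, hf.dirDeriv_transverse_velocity,
      hf.base.self_of_nhds, show f_s (t₀, 0) = _ from hf.velocity.self_of_nhds, map_neg, smul_neg,
      neg_neg]
  have h_comm : dirDeriv (0, 1) (dirDeriv (-1, 1) (dirDeriv (-1, 1) f)) (t₀, 0) =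
      dirDeriv (-1, 1) (dirDeriv (-1, 1) f_s) (t₀, 0) := by
    rw [dirDeriv_comm (hf.smooth.dirDeriv _)]
    exact dirDeriv_congr (hf.smooth.eventually.mono fun _ hq => dirDeriv_comm hq _ _) _
  calc (dirDeriv (-1, 1))^[3] f (t₀, 0)
      = dirDeriv (-1, 1) (dirDeriv (-1, 1) f_s) (t₀, 0) + deriv T t₀ := by
        change dirDeriv (-1, 1) (dirDeriv (-1, 1) (dirDeriv (-1, 1) f)) (t₀, 0) = _
        rw [dirDeriv_neg_one_one, h_comm, h_axis, sub_neg_eq_add]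
    _ = dirDeriv (-1, 1) (dirDeriv (0, 1) f_s) (t₀, 0) + deriv T t₀ + deriv T t₀ := by
        rw [dirDeriv_neg_one_one, dirDeriv_comm hfs, h_axis_velocity, sub_neg_eq_add]
    _ = (2 : ℝ) • covariantDeriv B γ T t₀ := by
        rw [h_geodesic, covariantDeriv]
        module

theorem exists_expansion {V : Type} [NormedAddCommGroup V] [NormedSpace ℝ V]
    [FiniteDimensional ℝ V] {B : V → V →L[ℝ] V →L[ℝ] V} {γ : ℝ → V} {f : ℝ × ℝ → V}
    (hf : IsTangentSurfaceNear B γ f t₀) (hB : SmoothNear B (γ t₀)) (hγ : SmoothNear γ t₀)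
    (h_symm : ∀ x u w, B x u w = B x w u) :
    ∃ R : ℝ × ℝ → V, SmoothNear R (t₀, 0) ∧ ∀ᶠ p in 𝓝 (t₀, (0 : ℝ)), f (p.1 - p.2, p.2) =
      γ p.1 - (p.2 ^ 2 / 2) • covariantDeriv B γ (deriv γ) p.1 +
        (p.2 ^ 3 / 3) • covariantDeriv B γ (covariantDeriv B γ (deriv γ)) p.1 +
        p.2 ^ 4 • R p := by
  have := FiniteDimensional.complete ℝ V
  have h_shear : SmoothNear (fun p : ℝ × ℝ => f (p.1 - p.2, p.2)) (t₀, 0) :=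
    hf.smooth.comp_of_eq (smoothNear_of_contDiff (by fun_prop) _) (by simp)
  obtain ⟨R, hR, h_taylor⟩ := h_shear.exists_taylor_remainder 3
  have h_fst : Tendsto Prod.fst (𝓝 (t₀, (0 : ℝ))) (𝓝 t₀) := continuous_fst.tendsto _
  refine ⟨R, hR, ?_⟩
  filter_upwards [h_taylor, h_fst.eventually hf.eventually,
    h_fst.eventually (hγ.continuousAt.eventually hB)] with p hp h_tangent hBp
  have h_line : (fun s => f (p.1 - s, s)) = fun s : ℝ => f ((p.1, 0) + s • (-1, 1)) := by
    simp [sub_eq_add_neg]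
  simp only [h_line, iteratedDeriv_comp_add_smul h_tangent.smooth, Finset.sum_range_succ,
    Finset.sum_range_zero, h_tangent.iterate_two_dirDeriv_transverse,
    h_tangent.iterate_three_dirDeriv_transverse (hBp.differentiableAt (by simp)) h_symm,
    Function.iterate_one, Function.iterate_zero, id, h_tangent.dirDeriv_transverse,
    h_tangent.base.self_of_nhds, Nat.factorial] at hp
  rw [hp]
  push_cast
  module

end IsTangentSurfaceNear

theorem IsTangentSurfaceNear.germEquiv_folded_umbrella {V : Type} [NormedAddCommGroup V]
    [NormedSpace ℝ V] [FiniteDimensional ℝ V] (h_dim : Module.finrank ℝ V = 3)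
    {B : V → V →L[ℝ] V →L[ℝ] V} {γ : ℝ → V} {f : ℝ × ℝ → V} {t₀ : ℝ}
    (hf : IsTangentSurfaceNear B γ f t₀) (hB : SmoothNear B (γ t₀)) (hγ : SmoothNear γ t₀)
    (h_symm : ∀ x u w, B x u w = B x w u)
    (h_dep : ¬ LinearIndependent ℝ ![deriv γ t₀, (covariantDeriv B γ)^[1] (deriv γ) t₀,
      (covariantDeriv B γ)^[2] (deriv γ) t₀])
    (h_ind : LinearIndependent ℝ ![deriv γ t₀, (covariantDeriv B γ)^[1] (deriv γ) t₀,
      (covariantDeriv B γ)^[3] (deriv γ) t₀]) :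
    GermEquiv f (t₀, 0)
      (fun p : ℝ × ℝ => ![p.1 + p.2, p.1 ^ 2 + 2 * p.2 * p.1, p.1 ^ 4 + 4 * p.2 * p.1 ^ 3])
      (0, 0) := by
  obtain ⟨R, hR, h_expansion⟩ := hf.exists_expansion hB hγ h_symm
  have h_shear : GermEquiv f (t₀, 0) (fun p : ℝ × ℝ => f (p.1 - p.2, p.2)) (t₀, 0) := by
    refine ⟨fun p => (p.1 + p.2, p.2), fun y => y, ?_, .refl _, by simp, by simp⟩
    exact .of_contDiff (ρ := fun p => (p.1 - p.2, p.2)) (by fun_prop) (by fun_prop)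
      (by simp) (by simp) _
  have h_span : (covariantDeriv B γ)^[2] (deriv γ) t₀ ∈
      Submodule.span ℝ {deriv γ t₀, (covariantDeriv B γ)^[1] (deriv γ) t₀} := by
    by_contra h
    exact h_dep (linearIndependent_triple_iff.2 ⟨(linearIndependent_triple_iff.1 h_ind).1, h⟩)
  have hT := hB.iterate_covariantDeriv hγ hγ.deriv
  refine h_shear.trans (.trans ?_ _root_.germEquiv_folded_umbrella)
  exact germEquiv_of_expansion h_dim hγ (hT 1) (hT 2) hR h_expansion (B (γ t₀) (deriv γ t₀))
    (eq_sub_of_add_eq rfl) (eq_sub_of_add_eq rfl) (eq_sub_of_add_eq rfl) h_ind h_span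

end TangentSurface

section Coordinates

variable {m : ℕ} {Γ : (Fin m → ℝ) → Fin m → Fin m → Fin m → ℝ}

/-- The Christoffel symbols as a bilinear form: `(christoffelForm Γ x u v)^λ` is
`Σ_{μ,ν} Γ^λ_{μν}(x) u^μ v^ν`. -/
def christoffelForm (Γ : (Fin m → ℝ) → Fin m → Fin m → Fin m → ℝ) (x : Fin m → ℝ) :
    (Fin m → ℝ) →L[ℝ] (Fin m → ℝ) →L[ℝ] Fin m → ℝ :=
  ∑ l, ∑ μ, ∑ ν, Γ x l μ ν • (ContinuousLinearMap.proj (R := ℝ) μ).smulRight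
    ((ContinuousLinearMap.proj (R := ℝ) (φ := fun _ : Fin m => ℝ) ν).smulRight (Pi.single l 1))

theorem christoffelForm_apply (x u v : Fin m → ℝ) (l : Fin m) :
    christoffelForm Γ x u v l = ∑ μ, ∑ ν, Γ x l μ ν * u μ * v ν := by
  simp [christoffelForm, Finset.sum_apply, Pi.single_apply, mul_assoc]

theorem christoffelForm_symm (h : ∀ x l μ ν, Γ x l μ ν = Γ x l ν μ) (x u v : Fin m → ℝ) :
    christoffelForm Γ x u v = christoffelForm Γ x v u := by
  ext l
  rw [christoffelForm_apply, christoffelForm_apply, Finset.sum_comm]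
  refine Finset.sum_congr rfl fun μ _ => Finset.sum_congr rfl fun ν _ => ?_
  rw [h, mul_right_comm]

theorem smoothNear_christoffelForm {Ω : Set (Fin m → ℝ)} (hΩ : IsOpen Ω)
    (hΓ : ∀ l μ ν, ContDiffOn ℝ ∞ (fun x => Γ x l μ ν) Ω) {x : Fin m → ℝ} (hx : x ∈ Ω) :
    SmoothNear (christoffelForm Γ) x := by
  refine smoothNear_of_contDiffOn (U := Ω) ?_ hΩ hx
  simp only [contDiffOn_clm_apply, contDiffOn_pi, christoffelForm_apply]
  fun_prop

theorem deriv_apply_eq {X : ℝ → Fin m → ℝ} {t : ℝ} (hX : DifferentiableAt ℝ X t) (l : Fin m) :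
    deriv (fun u => X u l) t = deriv X t l :=
  (hasDerivAt_pi.1 hX.hasDerivAt l).deriv

theorem covDeriv_eventuallyEq {γ : ℝ → Fin m → ℝ} {t₀ : ℝ}
    (hΓ : SmoothNear (christoffelForm Γ) (γ t₀)) (hγ : SmoothNear γ t₀) (k : ℕ) :
    covDeriv Γ γ k =ᶠ[𝓝 t₀] (covariantDeriv (christoffelForm Γ) γ)^[k] (deriv γ) := by
  induction k with
  | zero => rfl
  | succ k ih =>
    filter_upwards [ih.eventuallyEq_nhds, hΓ.iterate_covariantDeriv hγ hγ.deriv k]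
      with t h_eq h_smooth
    have h_deriv (l : Fin m) : deriv (fun u => covDeriv Γ γ k u l) t =
        deriv ((covariantDeriv (christoffelForm Γ) γ)^[k] (deriv γ)) t l := by
      rw [EventuallyEq.deriv_eq (h_eq.mono fun u hu => congrFun hu l)]
      exact deriv_apply_eq (h_smooth.differentiableAt (by simp)) l
    ext l
    rw [Function.iterate_succ_apply']
    simp only [covDeriv, h_deriv, h_eq.self_of_nhds, covariantDeriv, Pi.add_apply,
      christoffelForm_apply]

namespace IsGeodesicFlow

variable {Ω : Set (Fin m → ℝ)} {W : Set ((Fin m → ℝ) × (Fin m → ℝ) × ℝ)}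
  {φ : (Fin m → ℝ) × (Fin m → ℝ) × ℝ → Fin m → ℝ}

theorem deriv_deriv (hφ : IsGeodesicFlow Γ Ω W φ) {x v : Fin m → ℝ} {s : ℝ} (h : (x, v, s) ∈ W) :
    deriv (deriv fun r => φ (x, v, r)) s = -christoffelForm Γ (φ (x, v, s))
      (deriv (fun r => φ (x, v, r)) s) (deriv (fun r => φ (x, v, r)) s) := by
  let c : ℝ → Fin m → ℝ := fun r => φ (x, v, r)
  have hc : SmoothNear c s :=
    (smoothNear_of_contDiffOn hφ.smooth hφ.isOpen_W h).comp (f := fun r => (x, v, r))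
      (smoothNear_of_contDiff (by fun_prop) s)
  ext l
  have h_velocity : deriv (fun r => c r l) =ᶠ[𝓝 s] fun r => deriv c r l :=
    hc.eventually.mono fun r hr => deriv_apply_eq hr.differentiableAt l
  have h_geodesic := hφ.geodesic _ h l
  change deriv (deriv fun r => c r l) s +
    ∑ μ, ∑ ν, Γ (c s) l μ ν * deriv (fun r => c r μ) s * deriv (fun r => c r ν) s = 0 at h_geodesic
  simp only [h_velocity.deriv_eq, deriv_apply_eq hc.deriv.differentiableAt,
    deriv_apply_eq hc.differentiableAt] at h_geodesic
  rw [Pi.neg_apply, christoffelForm_apply]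
  exact eq_neg_of_add_eq_zero_left h_geodesic

theorem isTangentSurfaceNear (hφ : IsGeodesicFlow Γ Ω W φ) {γ : ℝ → Fin m → ℝ} {t₀ : ℝ}
    (hγ : SmoothNear γ t₀) (hγΩ : ∀ᶠ t in 𝓝 t₀, γ t ∈ Ω) :
    IsTangentSurfaceNear (christoffelForm Γ) γ (fun p => φ (γ p.1, deriv γ p.1, p.2)) t₀ := by
  have h_fst : SmoothNear (Prod.fst : ℝ × ℝ → ℝ) (t₀, 0) :=
    smoothNear_of_contDiff contDiff_fst _
  have h_arg : SmoothNear (fun p : ℝ × ℝ => (γ p.1, deriv γ p.1, p.2)) (t₀, 0) := by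
    filter_upwards [hγ.comp_of_eq h_fst rfl, hγ.deriv.comp_of_eq h_fst rfl] with p h₁ h₂
      using h₁.prodMk (h₂.prodMk contDiffAt_snd)
  have h_mem := hφ.mem_zero _ hγΩ.self_of_nhds (deriv γ t₀)
  have h_smooth : SmoothNear (fun p : ℝ × ℝ => φ (γ p.1, deriv γ p.1, p.2)) (t₀, 0) :=
    (smoothNear_of_contDiffOn hφ.smooth hφ.isOpen_W h_mem).comp_of_eq h_arg rfl
  have h_axis : Tendsto (fun t : ℝ => (t, (0 : ℝ))) (𝓝 t₀) (𝓝 (t₀, 0)) :=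
    Continuous.tendsto (by fun_prop) t₀
  refine ⟨h_smooth, hγΩ.mono fun t ht => hφ.init_pos _ ht _, ?_, ?_⟩
  · filter_upwards [hγΩ, h_axis.eventually h_smooth.eventually] with t ht h
    rw [← deriv_snd_slice h.differentiableAt]
    exact hφ.init_vel _ ht (deriv γ t)
  · filter_upwards [h_arg.continuousAt.eventually (hφ.isOpen_W.mem_nhds h_mem),
      h_smooth.eventually] with p hp h
    rw [← deriv_deriv_snd_slice h, ← deriv_snd_slice h.differentiableAt]
    exact hφ.deriv_deriv hp

end IsGeodesicFlow

end Coordinates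

/-- For a torsion-free connection on an open set `Ω ⊆ ℝ³`, a geodesic flow
`φ`, and a `C^∞` curve `γ : I → Ω`, if `∇γ(t₀), ∇²γ(t₀), ∇³γ(t₀)` are linearly
dependent while `∇γ(t₀), ∇²γ(t₀), ∇⁴γ(t₀)` are linearly independent, then the germ at
`(t₀, 0)` of the `∇`-tangent surface `f(t,s) = φ(γ(t), γ'(t), s)` is diffeomorphic to
the folded umbrella `(t,s) ↦ (t+s, t²+2st, t⁴+4st³)`. -/
theorem tangent_surface_folded_umbrella
    (Γ : (Fin 3 → ℝ) → Fin 3 → Fin 3 → Fin 3 → ℝ)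
    (Ω : Set (Fin 3 → ℝ)) (hΩ : IsOpen Ω)
    (hΓ : ∀ l μ ν, ContDiffOn ℝ (⊤ : ℕ∞) (fun x => Γ x l μ ν) Ω)
    (hTF : ∀ x l μ ν, Γ x l μ ν = Γ x l ν μ)
    (W : Set ((Fin 3 → ℝ) × (Fin 3 → ℝ) × ℝ))
    (φ : (Fin 3 → ℝ) × (Fin 3 → ℝ) × ℝ → Fin 3 → ℝ)
    (hφ : IsGeodesicFlow Γ Ω W φ)
    (I : Set ℝ) (hI : IsOpen I) (hI' : I.OrdConnected)
    (γ : ℝ → Fin 3 → ℝ) (hγ : ContDiffOn ℝ (⊤ : ℕ∞) γ I) (hγΩ : ∀ t ∈ I, γ t ∈ Ω)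
    (t₀ : ℝ) (ht₀ : t₀ ∈ I)
    (hdep : ¬ LinearIndependent ℝ
      ![covDeriv Γ γ 0 t₀, covDeriv Γ γ 1 t₀, covDeriv Γ γ 2 t₀])
    (hind : LinearIndependent ℝ
      ![covDeriv Γ γ 0 t₀, covDeriv Γ γ 1 t₀, covDeriv Γ γ 3 t₀]) :
    GermDiffeomorphic
      (fun p : ℝ × ℝ => φ (γ p.1, deriv γ p.1, p.2)) (t₀, (0 : ℝ))
      (fun p : ℝ × ℝ =>
        ![p.1 + p.2, p.1 ^ 2 + 2 * p.2 * p.1, p.1 ^ 4 + 4 * p.2 * p.1 ^ 3])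
      ((0 : ℝ), (0 : ℝ)) := by
  have hγ₀ : SmoothNear γ t₀ := smoothNear_of_contDiffOn hγ hI ht₀
  have hΓ₀ : SmoothNear (christoffelForm Γ) (γ t₀) :=
    smoothNear_christoffelForm hΩ hΓ (hγΩ t₀ ht₀)
  have hf : IsTangentSurfaceNear (christoffelForm Γ) γ
      (fun p => φ (γ p.1, deriv γ p.1, p.2)) t₀ :=
    hφ.isTangentSurfaceNear hγ₀ (eventually_of_mem (hI.mem_nhds ht₀) hγΩ)
  have h_cov (k : ℕ) : covDeriv Γ γ k t₀ =
      (covariantDeriv (christoffelForm Γ) γ)^[k] (deriv γ) t₀ :=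
    (covDeriv_eventuallyEq hΓ₀ hγ₀ k).self_of_nhds
  simp only [h_cov] at hdep hind
  exact (hf.germEquiv_folded_umbrella (by simp) hΓ₀ hγ₀ (christoffelForm_symm hTF)
    hdep hind).germDiffeomorphic hf.smooth.continuousAt
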